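/- Every coherent locally free module (finite projective module) over the ring K⟨γ⁻¹s⟩⟨ρ/t, t/ρ⟩ of functions on 𝔹^m_γ × A^n_K([ρ,ρ]) is free, for any γ ∈ ℝ^m_{>0} and ρ ∈ ℝ^n_{>0}. -/

import Mathlib

open Filter

namespace Stmt5

variable {K : Type*} [NontriviallyNormedField K]

/-- index set of monomials `s^i t^j`. -/
abbrev Idx (m n : ℕ) := (Fin m → ℕ) × (Fin n → ℤ)

/-- the `(γ, ρ)`-weight `γ^i ρ^j` of a monomial. -/
noncomputable def wt {m n : ℕ} (γ : Fin m → ℝ) (ρ : Fin n → ℝ) (x : Idx m n) : ℝ :=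
  (∏ k, γ k ^ x.1 k) * ∏ k, ρ k ^ x.2 k

/-- `A`, together with the Laurent-expansion map `coeffs`, is (a model of) the ring
`K⟨γ⁻¹s⟩⟨ρ/t, t/ρ⟩` of global functions on `𝔹^m_γ × A^n_K([ρ,ρ])`: the ring of
Laurent series `∑ f_{i,j} s^i t^j` with `‖f_{i,j}‖ γ^i ρ^j → 0`, with convolution
multiplication. -/
structure IsGaussCompletion {m n : ℕ} (γ : Fin m → ℝ) (ρ : Fin n → ℝ)
    (A : Type*) [CommRing A] (coeffs : A → Idx m n → K) : Prop where
  injective : Function.Injective coeffs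
  map_add : ∀ a b : A, coeffs (a + b) = coeffs a + coeffs b
  map_one : coeffs 1 = fun x => if x = 0 then 1 else 0
  map_mul : ∀ a b : A, ∀ x : Idx m n, coeffs (a * b) x =
    ∑' pq : Idx m n × Idx m n,
      if pq.1 + pq.2 = x then coeffs a pq.1 * coeffs b pq.2 else 0
  decay : ∀ a : A,
    Tendsto (fun x : Idx m n => ‖coeffs a x‖ * wt γ ρ x) cofinite (nhds 0)
  surj : ∀ c : Idx m n → K,
    Tendsto (fun x : Idx m n => ‖c x‖ * wt γ ρ x) cofinite (nhds 0) →
      ∃ a : A, coeffs a = c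

end Stmt5

open Stmt5

/-!
The ring is the completion of a (Laurent) polynomial ring for its Gauss norm. The proof adjoins one
variable `t` at a time, passing from `R` to `A`, for all coefficient fields `K` simultaneously.

* `A` embeds isometrically into the completed polynomial ring `C` in the remaining variables over
  the completion of `K(t)`, where the projective module is free by induction. Fractions with
  numerator in `A` and denominator a polynomial in `t` are dense in `C`, so approximating a
  splitting over `C` shows that the module is free over `A[1/h]` for some `h` close to a nonzero
  polynomial in `t`.
* By Weierstrass preparation, `h` is a unit times a monic polynomial `ω` over `R`, and Weierstrass
  division gives `R[X] / (ω ^ k) = A / (ω ^ k)`. Hence a splitting away from `ω` can be approximated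
  by matrices over `R[X]`, which descends the module to `R[X]`, still free after inverting `ω`.
* By Horrocks' theorem and Quillen patching the module over `R[X]` is extended from `R`, where it is
  free by induction.
-/

namespace QuillenSuslin

open Polynomial Matrix
open scoped NNReal

universe u v

/-! ### Idempotent matrices -/

section Idempotents

variable {A B : Type*} [CommRing A] [CommRing B] {l m n : Type*} [Fintype l] [Fintype m] [Fintype n]

/-- Murray–von Neumann equivalence of square matrices. For idempotents `e` and `f` it says that the
projective modules `range e` and `range f` are isomorphic. -/
def IdemEquiv (e : Matrix m m A) (f : Matrix n n A) : Prop :=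
  ∃ (a : Matrix m n A) (b : Matrix n m A), a * b = e ∧ b * a = f

/-- The matrix `e` is Murray–von Neumann equivalent to an identity matrix; for an idempotent `e`
this says that the projective module `range e` is free. -/
def IsFreeIdem (e : Matrix m m A) : Prop :=
  ∃ r : ℕ, IdemEquiv e (1 : Matrix (Fin r) (Fin r) A)

/-- The matrix `e` becomes equivalent to an identity matrix after inverting `h`, with the
denominator of both comparison maps cleared. For an idempotent `e` and a regular `h` it says that
`range e` embeds into some `Aʳ` with image containing `h Aʳ`. -/
def SplitsAway (h : A) (e : Matrix m m A) : Prop :=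
  ∃ (r : ℕ) (a : Matrix m (Fin r) A) (b : Matrix (Fin r) m A), a * b = h • e ∧ b * a = h • 1

/-- Every finite projective `A`-module is free, expressed through idempotent matrices so that the
property does not involve a universe of modules. -/
def ProjectivesFree (A : Type*) [CommRing A] : Prop :=
  ∀ (N : ℕ) (e : Matrix (Fin N) (Fin N) A), IsIdempotentElem e → IsFreeIdem e

namespace IdemEquiv

variable {e : Matrix l l A} {f : Matrix m m A} {g : Matrix n n A}

theorem refl (he : IsIdempotentElem e) : IdemEquiv e e := ⟨e, e, he, he⟩

theorem trans (he : IsIdempotentElem e) (hg : IsIdempotentElem g) :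
    IdemEquiv e f → IdemEquiv f g → IdemEquiv e g := by
  rintro ⟨a, b, hab, hba⟩ ⟨c, d, hcd, hdc⟩
  refine ⟨a * c, d * b, ?_, ?_⟩
  · calc a * c * (d * b) = a * (c * d) * b := by simp only [Matrix.mul_assoc]
      _ = a * b * (a * b) := by rw [hcd, ← hba]; simp only [Matrix.mul_assoc]
      _ = e := by rw [hab, he.eq]
  · calc d * b * (a * c) = d * (b * a) * c := by simp only [Matrix.mul_assoc]
      _ = d * c * (d * c) := by rw [hba, ← hcd]; simp only [Matrix.mul_assoc]
      _ = g := by rw [hdc, hg.eq]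

theorem map (φ : A →+* B) : IdemEquiv e f → IdemEquiv (e.map φ) (f.map φ) := by
  rintro ⟨a, b, rfl, rfl⟩
  exact ⟨a.map φ, b.map φ, Matrix.map_mul.symm, Matrix.map_mul.symm⟩

theorem reindex (he : IsIdempotentElem e) (σ : l ≃ m) : IdemEquiv e (Matrix.reindex σ σ e) := by
  refine ⟨e.submatrix id σ.symm, e.submatrix σ.symm id, ?_, ?_⟩
  · rw [Matrix.submatrix_mul_equiv, he.eq, Matrix.submatrix_id_id]
  · rw [← Matrix.submatrix_mul _ _ _ _ _ Function.bijective_id, he.eq, Matrix.reindex_apply]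

end IdemEquiv

theorem isIdempotentElem_map {e : Matrix m m A} (he : IsIdempotentElem e) (φ : A →+* B) :
    IsIdempotentElem (e.map φ) := by
  rw [IsIdempotentElem, ← Matrix.map_mul, he.eq]

theorem IsFreeIdem.map {e : Matrix m m A} (φ : A →+* B) :
    IsFreeIdem e → IsFreeIdem (e.map φ) := by
  rintro ⟨r, h⟩
  exact ⟨r, by simpa using h.map φ⟩

theorem IsFreeIdem.of_equiv {e : Matrix m m A} {f : Matrix n n A} (he : IsIdempotentElem e)
    (hef : IdemEquiv e f) : IsFreeIdem f → IsFreeIdem e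
  | ⟨r, hf⟩ => ⟨r, hef.trans he (.one) hf⟩

theorem SplitsAway.map {h : A} {e : Matrix m m A} (φ : A →+* B) :
    SplitsAway h e → SplitsAway (φ h) (e.map φ) := by
  rintro ⟨r, a, b, hab, hba⟩
  refine ⟨r, a.map φ, b.map φ, ?_, ?_⟩
  · rw [← Matrix.map_mul, hab, Matrix.map_smul' _ _ _ (map_mul φ)]
  · rw [← Matrix.map_mul, hba, Matrix.map_smul' _ _ _ (map_mul φ),
      Matrix.map_one _ (map_zero φ) (map_one φ)]

theorem SplitsAway.mul_left {h : A} (u : A) {e : Matrix m m A} :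
    SplitsAway h e → SplitsAway (u * h) e := by
  rintro ⟨r, a, b, hab, hba⟩
  exact ⟨r, u • a, b, by rw [Matrix.smul_mul, hab, smul_smul],
    by rw [Matrix.mul_smul, hba, smul_smul]⟩

theorem ProjectivesFree.isFreeIdem (hA : ProjectivesFree A) {e : Matrix m m A}
    (he : IsIdempotentElem e) : IsFreeIdem e := by
  have heq := IdemEquiv.reindex he (Fintype.equivFin m)
  refine .of_equiv he heq (hA _ _ ?_)
  rw [IsIdempotentElem, Matrix.reindex_apply, Matrix.submatrix_mul_equiv, he.eq]

theorem isFreeIdem_of_factorization [DecidableEq m] {e : Matrix m m A} {M : Type*} [AddCommGroup M]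
    [Module A M] [Module.Free A M] (f : (m → A) →ₗ[A] M) (g : M →ₗ[A] (m → A))
    (hgf : g ∘ₗ f = Matrix.toLin' e) (hfg : f ∘ₗ g = LinearMap.id) : IsFreeIdem e := by
  have : Module.Finite A M := .of_surjective f fun x => ⟨g x, LinearMap.congr_fun hfg x⟩
  have basis := (Module.Free.chooseBasis A M).reindex (Fintype.equivFin _)
  refine ⟨_, LinearMap.toMatrix' (g ∘ₗ basis.equivFun.symm.toLinearMap),
    LinearMap.toMatrix' (basis.equivFun.toLinearMap ∘ₗ f), ?_, ?_⟩
  · rw [← LinearMap.toMatrix'_comp, ← LinearMap.toMatrix'_toLin' e, ← hgf]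
    congr 1
    ext; simp
  · rw [← LinearMap.toMatrix'_comp, ← LinearMap.toMatrix'_id]
    congr 1
    calc _ = basis.equivFun.toLinearMap ∘ₗ (f ∘ₗ g) ∘ₗ basis.equivFun.symm.toLinearMap := rfl
      _ = LinearMap.id := by rw [hfg]; ext; simp

theorem isFreeIdem_of_free_range [DecidableEq m] {e : Matrix m m A} (he : IsIdempotentElem e)
    [Module.Free A (LinearMap.range (Matrix.toLin' e))] : IsFreeIdem e := by
  refine isFreeIdem_of_factorization (Matrix.toLin' e).rangeRestrict
    (LinearMap.range (Matrix.toLin' e)).subtype rfl ?_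
  ext ⟨_, y, rfl⟩ : 2
  simp [he.eq]

theorem projectivesFree_of_field (k : Type*) [Field k] : ProjectivesFree k :=
  fun _ _ he => isFreeIdem_of_free_range he

theorem ProjectivesFree.of_ringEquiv (φ : A ≃+* B) (hA : ProjectivesFree A) :
    ProjectivesFree B := by
  intro N e he
  have hφ : (φ : A → B) ∘ φ.symm = id := φ.self_comp_symm
  simpa [Matrix.map_map, hφ] using
    (hA N _ (isIdempotentElem_map he (φ.symm : B →+* A))).map (φ : A →+* B)

theorem ProjectivesFree.free (hA : ProjectivesFree A) (P : Type*) [AddCommGroup P] [Module A P]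
    [Module.Finite A P] [Module.Projective A P] : Module.Free A P := by
  obtain ⟨N, f, hf⟩ := Module.Finite.exists_fin' A P
  obtain ⟨g, hfg⟩ := Module.projective_lifting_property f LinearMap.id hf
  obtain ⟨r, a, b, hab, hba⟩ := hA N (LinearMap.toMatrix' (g ∘ₗ f)) (by
    rw [IsIdempotentElem, ← LinearMap.toMatrix'_comp, LinearMap.comp_assoc,
      ← LinearMap.comp_assoc f, hfg, LinearMap.id_comp])
  have hab' : Matrix.toLin' a ∘ₗ Matrix.toLin' b = g ∘ₗ f := by
    rw [← Matrix.toLin'_mul, hab, Matrix.toLin'_toMatrix']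
  have hba' : Matrix.toLin' b ∘ₗ Matrix.toLin' a = LinearMap.id := by
    rw [← Matrix.toLin'_mul, hba, Matrix.toLin'_one]
  refine .of_equiv (LinearEquiv.ofLinearMap (f ∘ₗ Matrix.toLin' a) (Matrix.toLin' b ∘ₗ g) ?_ ?_)
  · calc _ = f ∘ₗ (Matrix.toLin' a ∘ₗ Matrix.toLin' b) ∘ₗ g := rfl
      _ = (f ∘ₗ g) ∘ₗ (f ∘ₗ g) := by rw [hab']; rfl
      _ = LinearMap.id := by rw [hfg]; rfl
  · calc _ = Matrix.toLin' b ∘ₗ (g ∘ₗ f) ∘ₗ Matrix.toLin' a := rfl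
      _ = (Matrix.toLin' b ∘ₗ Matrix.toLin' a) ∘ₗ (Matrix.toLin' b ∘ₗ Matrix.toLin' a) := by
        rw [← hab']; rfl
      _ = LinearMap.id := by rw [hba']; rfl

end Idempotents

/-! ### Quillen patching -/

section Patching

variable {R S : Type*} [CommRing R] [CommRing S] {n : Type*}

/-- The substitution `X ↦ X + cY`, from `R[X]` to `R[X][Y]`. -/
noncomputable def translate (c : R) : R[X] →+* R[X][X] :=
  eval₂RingHom (C.comp C) (C X + C (C c) * X)

/-- The substitution `X ↦ X + cY`, `Y ↦ Y` on `R[X][Y]`. -/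
noncomputable def translateOuter (c : R) : R[X][X] →+* R[X][X] :=
  eval₂RingHom (translate c) X

/-- The substitution `X ↦ X`, `Y ↦ cY` on `R[X][Y]`. -/
noncomputable def scaleOuter (c : R) : R[X][X] →+* R[X][X] :=
  compRingHom (C (C c) * X)

theorem translate_zero : translate (0 : R) = C := by
  ext x <;> simp [translate]

theorem scaleOuter_comp_translate (a c : R) :
    (scaleOuter a).comp (translate c) = translate (a * c) := by
  refine Polynomial.ringHom_ext (fun x => by simp [translate, scaleOuter]) ?_
  simp only [RingHom.comp_apply, translate, scaleOuter, coe_eval₂RingHom, eval₂_X, map_add,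
    map_mul, coe_compRingHom_apply, C_comp, X_comp]
  ring

theorem scaleOuter_comp_C (a : R) : (scaleOuter a).comp (C : R[X] →+* R[X][X]) = C := by
  ext x <;> simp [scaleOuter]

theorem translateOuter_comp_translate (a c : R) :
    (translateOuter a).comp (translate c) = translate (a + c) := by
  refine Polynomial.ringHom_ext (fun x => by simp [translate, translateOuter]) ?_
  simp only [RingHom.comp_apply, translate, translateOuter, coe_eval₂RingHom, eval₂_X, map_add,
    map_mul, eval₂_C]
  ring

theorem translateOuter_comp_C (a : R) :
    (translateOuter a).comp (C : R[X] →+* R[X][X]) = translate a := by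
  ext x <;> simp [translateOuter]

theorem evalRingHom_comp_translate (c : R) :
    (evalRingHom 0).comp (translate c) = RingHom.id R[X] := by
  ext x <;> simp [translate]

theorem evalRingHom_comp_C : (evalRingHom 0).comp C = RingHom.id R[X] := by
  ext x <;> simp

theorem mapRingHom_comp_translate (φ : R →+* S) (c : R) :
    (mapRingHom (mapRingHom φ)).comp (translate c) =
      (translate (φ c)).comp (mapRingHom φ) := by
  ext x <;> simp [translate]

theorem mapRingHom_comp_C (φ : R →+* S) :
    (mapRingHom (mapRingHom φ)).comp C = C.comp (mapRingHom φ) := by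
  ext x <;> simp

theorem coeff_scaleOuter (c : R) (f : R[X][X]) (k : ℕ) :
    (scaleOuter c f).coeff k = f.coeff k * C c ^ k :=
  comp_C_mul_X_coeff

theorem map_map_of_comp_eq_id {l : Type*} {φ : R →+* S} {ψ : S →+* R} (h : ψ.comp φ = .id R)
    (M : Matrix n l R) : (M.map φ).map ψ = M := by
  rw [Matrix.map_map, ← RingHom.coe_comp, h]
  rfl

variable [Fintype n]

/-- Quillen's ideal of those `c` for which `e(X + cY)` is equivalent to `e(X)` over `R[X][Y]`. -/
noncomputable def quillenIdeal (e : Matrix n n R[X]) (he : IsIdempotentElem e) : Ideal R where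
  carrier := {c | IdemEquiv (e.map (translate c)) (e.map (C : R[X] →+* R[X][X]))}
  zero_mem' := by
    rw [Set.mem_ofPred_eq, translate_zero]
    exact .refl (isIdempotentElem_map he C)
  add_mem' := by
    intro c d hc hd
    have hcd := hd.map (translateOuter c)
    simp only [Matrix.map_map, ← RingHom.coe_comp, translateOuter_comp_translate,
      translateOuter_comp_C] at hcd
    exact hcd.trans (isIdempotentElem_map he _) (isIdempotentElem_map he _) hc
  smul_mem' := by
    intro a c hc
    have hac := hc.map (scaleOuter a)
    simp only [Matrix.map_map, ← RingHom.coe_comp, scaleOuter_comp_translate,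
      scaleOuter_comp_C] at hac
    exact hac

/-- The comparison `τ(a) b`, where `e = a b` and `b a = 1`, is the identity of `range e` at
`Y = 0`. -/
theorem IsFreeIdem.exists_translate_equiv {e : Matrix n n R[X]} (he : IsFreeIdem e) (c : R) :
    ∃ F F' : Matrix n n R[X][X], F * F' = e.map (translate c) ∧ F' * F = e.map C ∧
      F.map (evalRingHom 0) = e ∧ F'.map (evalRingHom 0) = e := by
  obtain ⟨r, a, b, hab, hba⟩ := he
  have hone (φ : R[X] →+* R[X][X]) : b.map φ * a.map φ = 1 := by
    rw [← Matrix.map_mul, hba, Matrix.map_one _ (map_zero φ) (map_one φ)]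
  have hτ := evalRingHom_comp_translate c
  refine ⟨a.map (translate c) * b.map C, a.map C * b.map (translate c), ?_, ?_, ?_, ?_⟩
  · rw [Matrix.mul_assoc, ← Matrix.mul_assoc (b.map _), hone, Matrix.one_mul, ← Matrix.map_mul, hab]
  · rw [Matrix.mul_assoc, ← Matrix.mul_assoc (b.map _), hone, Matrix.one_mul, ← Matrix.map_mul, hab]
  · rw [Matrix.map_mul, map_map_of_comp_eq_id hτ, map_map_of_comp_eq_id evalRingHom_comp_C, hab]
  · rw [Matrix.map_mul, map_map_of_comp_eq_id hτ, map_map_of_comp_eq_id evalRingHom_comp_C, hab]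

section Localization

variable (M : Submonoid R) [Algebra R S] [IsLocalization M S]

include M in
theorem exists_scaleOuter_mem_range (f : S[X][X])
    (h0 : f.coeff 0 ∈ (mapRingHom (algebraMap R S)).range) :
    ∃ c ∈ M, ∀ d : R, c ∣ d →
      scaleOuter (algebraMap R S d) f ∈ (mapRingHom (mapRingHom (algebraMap R S))).range := by
  let := Polynomial.algebra R S
  have := Polynomial.isLocalization M S
  obtain ⟨⟨_, c, hc, rfl⟩, hcf⟩ :=
    IsLocalization.exist_integer_multiples (M.map (C : R →+* R[X])) f.support f.coeff
  refine ⟨c, hc, ?_⟩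
  rintro _ ⟨d, rfl⟩
  refine (mem_map_range _).2 fun k => ?_
  rw [coeff_scaleOuter]
  rcases k with _ | k
  · simpa using h0
  by_cases hk : k + 1 ∈ f.support
  · obtain ⟨g, hg⟩ := hcf _ hk
    have hg' : g.map (algebraMap R S) = C (algebraMap R S c) * f.coeff (k + 1) := by
      simpa [Algebra.smul_def, Polynomial.algebraMap_def] using hg
    refine ⟨g * C d * C (c * d) ^ k, ?_⟩
    simp only [coe_mapRingHom, Polynomial.map_mul, Polynomial.map_pow, map_C, hg', map_mul]
    ring
  · simp [notMem_support_iff.1 hk]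

omit [Fintype n] in
include M in
theorem exists_scaleOuter_matrix_lift [Finite n] (F : Matrix n n S[X][X]) (F₀ : Matrix n n R[X])
    (h0 : F.map (evalRingHom 0) = F₀.map (mapRingHom (algebraMap R S))) :
    ∃ c ∈ M, ∀ d : R, c ∣ d → ∃ G : Matrix n n R[X][X],
      G.map (mapRingHom (mapRingHom (algebraMap R S))) =
        F.map (scaleOuter (algebraMap R S d)) := by
  have := Fintype.ofFinite n
  have hF (i j) : (F i j).coeff 0 ∈ (mapRingHom (algebraMap R S)).range :=
    ⟨F₀ i j, by simpa [coeff_zero_eq_eval_zero] using (congrFun₂ h0 i j).symm⟩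
  choose c hc hlift using fun i j => exists_scaleOuter_mem_range M (F i j) (hF i j)
  refine ⟨∏ i, ∏ j, c i j, M.prod_mem fun i _ => M.prod_mem fun j _ => hc i j, fun d hd => ?_⟩
  have hdvd (i j) : c i j ∣ d :=
    ((Finset.dvd_prod_of_mem _ (Finset.mem_univ j)).trans
      (Finset.dvd_prod_of_mem (fun i => ∏ j, c i j) (Finset.mem_univ i))).trans hd
  choose G hG using fun i j => hlift i j d (hdvd i j)
  exact ⟨.of G, by ext1 i j; exact hG i j⟩

theorem exists_mem_quillenIdeal (hM : M ≤ nonZeroDivisors R) {e : Matrix n n R[X]}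
    (he : IsIdempotentElem e) (hfree : IsFreeIdem (e.map (mapRingHom (algebraMap R S)))) :
    ∃ d ∈ M, d ∈ quillenIdeal e he := by
  obtain ⟨F, F', hFF', hF'F, hF, hF'⟩ := hfree.exists_translate_equiv 1
  obtain ⟨c, hc, hlift⟩ := exists_scaleOuter_matrix_lift M F e hF
  obtain ⟨c', hc', hlift'⟩ := exists_scaleOuter_matrix_lift M F' e hF'
  obtain ⟨G, hG⟩ := hlift (c * c') (dvd_mul_right _ _)
  obtain ⟨G', hG'⟩ := hlift' (c * c') (dvd_mul_left _ _)
  have hinj : Function.Injective (mapRingHom (mapRingHom (algebraMap R S))) :=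
    Polynomial.map_injective _ (Polynomial.map_injective _ (IsLocalization.injective S hM))
  refine ⟨c * c', mul_mem hc hc', G, G', Matrix.map_injective hinj ?_,
    Matrix.map_injective hinj ?_⟩ <;> dsimp only
  · rw [Matrix.map_mul, hG, hG', ← Matrix.map_mul, hFF']
    simp only [Matrix.map_map, ← RingHom.coe_comp]
    rw [mapRingHom_comp_translate, ← RingHom.comp_assoc, scaleOuter_comp_translate, mul_one]
  · rw [Matrix.map_mul, hG, hG', ← Matrix.map_mul, hF'F]
    simp only [Matrix.map_map, ← RingHom.coe_comp]
    rw [mapRingHom_comp_C, ← RingHom.comp_assoc, scaleOuter_comp_C]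

end Localization

theorem idemEquiv_eval_zero_of_locally_free [IsDomain R] {e : Matrix n n R[X]}
    (he : IsIdempotentElem e)
    (hloc : ∀ (p : Ideal R) [p.IsMaximal],
      IsFreeIdem (e.map (mapRingHom (algebraMap R (Localization.AtPrime p))))) :
    IdemEquiv e ((e.map (evalRingHom 0)).map C) := by
  have htop : quillenIdeal e he = ⊤ := by
    by_contra hne
    obtain ⟨p, hp, hle⟩ := Ideal.exists_le_maximal _ hne
    obtain ⟨d, hd, hd'⟩ :=
      exists_mem_quillenIdeal p.primeCompl p.primeCompl_le_nonZeroDivisors he (hloc p)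
    exact hd (hle hd')
  have hone : IdemEquiv (e.map (translate 1)) (e.map (C : R[X] →+* R[X][X])) :=
    (Ideal.eq_top_iff_one _).1 htop
  -- Setting `X = 0` and then renaming `Y` to `X` turns `e(X + Y)` into `e(X)`.
  let f : R[X][X] →+* R[X] := eval₂RingHom (C.comp (evalRingHom 0)) X
  have hf : f.comp (translate 1) = RingHom.id _ := by ext x <;> simp [f, translate]
  have hf' : f.comp C = C.comp (evalRingHom 0) := by ext x <;> simp [f]
  have hmap := hone.map f
  simp only [Matrix.map_map, ← RingHom.coe_comp, hf, hf'] at hmap ⊢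
  exact hmap

theorem ProjectivesFree.isFreeIdem_of_locally_free [IsDomain R] (hR : ProjectivesFree R)
    {e : Matrix n n R[X]} (he : IsIdempotentElem e)
    (hloc : ∀ (p : Ideal R) [p.IsMaximal],
      IsFreeIdem (e.map (mapRingHom (algebraMap R (Localization.AtPrime p))))) :
    IsFreeIdem e :=
  .of_equiv he (idemEquiv_eval_zero_of_locally_free he hloc)
    ((hR.isFreeIdem (isIdempotentElem_map he _)).map C)

end Patching

/-! ### Horrocks' theorem -/

section DegreeBounds

theorem exists_degree_bounds_of_smul_mem {k : Type*} [Field k] {f : k[X]} (hf : f ≠ 0) {r : ℕ}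
    (L : Submodule k[X] (Fin r → k[X])) (hL : ∀ v, f • v ∈ L) :
    ∃ n : Fin r → ℕ, (∀ v, ∃ u : Fin r → k[X], (∀ i, (u i).degree < n i) ∧ v - u ∈ L) ∧
      ∀ u ∈ L, (∀ i, (u i).degree < n i) → u = 0 := by
  induction r with
  | zero =>
    exact ⟨0, fun v => ⟨v, fun i => i.elim0, by simp only [sub_self, zero_mem]⟩,
      fun u _ _ => Subsingleton.elim _ _⟩
  | succ r ih =>
    let cons₀ := (Fin.consLinearEquiv k[X] fun _ : Fin (r + 1) => k[X]).toLinearMap ∘ₗ .inr _ _ _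
    have cons₀_apply (v : Fin r → k[X]) : cons₀ v = Fin.cons 0 v := rfl
    obtain ⟨n, hex, huniq⟩ := ih (L.comap cons₀) fun v => by
      simpa only [Submodule.mem_comap, map_smul] using hL (cons₀ v)
    obtain ⟨d, hd⟩ := (IsPrincipalIdealRing.principal (L.map (LinearMap.proj 0))).principal
    have hmem {x : k[X]} : (∃ v ∈ L, v 0 = x) ↔ d ∣ x := by
      rw [← Ideal.mem_span_singleton, ← Ideal.submodule_span_eq, ← hd]; simp
    have hd0 : d ≠ 0 := ne_zero_of_dvd_ne_zero hf (hmem.1 ⟨_, hL 1, by simp⟩)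
    obtain ⟨w, hw, hwd⟩ := hmem.2 dvd_rfl
    refine ⟨Fin.cons d.natDegree n, fun v => ?_, fun u hu hdeg => ?_⟩
    · obtain ⟨u, hu, huL⟩ := hex (Fin.tail (v - (v 0 / d) • w))
      refine ⟨Fin.cons (v 0 % d) u, fun i => ?_, ?_⟩
      · refine Fin.cases ?_ (by simpa using hu) i
        simpa [← degree_eq_natDegree hd0] using degree_mod_lt (v 0) hd0
      · convert add_mem (L.smul_mem (v 0 / d) hw) huL using 1
        ext i : 1
        refine Fin.cases ?_ (fun i => ?_) i
        · simp [cons₀_apply, hwd, EuclideanDomain.mod_eq_sub_mul_div, mul_comm d]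
        · simp [cons₀_apply, Fin.tail, ← add_sub_assoc]
    · have hu0 : u 0 = 0 := eq_zero_of_dvd_of_degree_lt (hmem.1 ⟨u, hu, rfl⟩)
        (by simpa [← degree_eq_natDegree hd0] using hdeg 0)
      have hcons : cons₀ (Fin.tail u) = u := by rw [cons₀_apply, ← hu0, Fin.cons_self_tail]
      rw [← hcons, huniq (Fin.tail u) (by rwa [Submodule.mem_comap, hcons]) fun i => hdeg i.succ,
        map_zero]

end DegreeBounds

section LeadingForm

variable {R : Type*} [CommRing R] {r : ℕ} {n : Fin r → ℕ} {u : Fin r → Fin r → R[X]}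

theorem linearIndependent_single_X_pow_sub (hu : ∀ i j, (u i j).degree < n j) :
    LinearIndependent R[X] fun i => Pi.single i (X ^ n i) - u i := by
  refine Fintype.linearIndependent_iff.2 fun c hc => ?_
  by_contra! ⟨i₀, hi₀⟩
  obtain ⟨j, -, hj⟩ := Finset.exists_max_image .univ (fun i => (c i).degree) ⟨i₀, Finset.mem_univ _⟩
  have hj0 : (c j).degree ≠ ⊥ := fun h => hi₀ (degree_eq_bot.1 (le_bot_iff.1
    ((hj i₀ (Finset.mem_univ _)).trans h.le)))
  have hcol : c j * X ^ n j = ∑ i, c i * u i j := by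
    have := congrFun hc j
    simpa [Finset.sum_apply, mul_sub, Pi.single_apply, sub_eq_zero] using this
  have hlt : (∑ i, c i * u i j).degree < (c j).degree + n j := by
    refine (degree_sum_le _ _).trans_lt ((Finset.sup_lt_iff ?_).2 fun i _ => ?_)
    · exact bot_lt_iff_ne_bot.2 (by simp [hj0])
    · exact (degree_mul_le _ _).trans_lt
        ((add_le_add_left (hj i (Finset.mem_univ _)) _).trans_lt
          (WithBot.add_lt_add_left hj0 (hu i j)))
  have : Nontrivial R := Polynomial.nontrivial_iff.1 ⟨_, _, hi₀⟩
  rw [← hcol, degree_mul_X_pow] at hlt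
  exact lt_irrefl _ hlt

theorem degreeLT_pi_sup_span_eq_top (hu : ∀ i j, (u i j).degree < n j) :
    Submodule.pi Set.univ (fun i => degreeLT R (n i)) ⊔
      (Submodule.span R[X] (Set.range fun i => Pi.single i (X ^ n i) - u i)).restrictScalars R =
        ⊤ := by
  set D := Submodule.pi Set.univ (fun i => degreeLT R (n i))
  set N := Submodule.span R[X] (Set.range fun i => Pi.single i (X ^ n i) - u i)
  have key (k : ℕ) (v : Fin r → R[X]) (hv : ∀ j, (v j).degree < (n j + k : ℕ)) :
      v ∈ D ⊔ N.restrictScalars R := by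
    induction k generalizing v with
    | zero => exact Submodule.mem_sup_left (by simpa [D, mem_degreeLT] using hv)
    | succ k ih =>
      let w := ∑ i, monomial k ((v i).coeff (n i + k)) • (Pi.single i (X ^ n i) - u i)
      have hw : w ∈ N := sum_mem fun i _ => N.smul_mem _ (Submodule.subset_span ⟨i, rfl⟩)
      rw [← sub_add_cancel v w]
      refine add_mem (ih _ fun j => ?_) (Submodule.mem_sup_right hw)
      have hcol : (v - w) j = (v j - monomial (n j + k) ((v j).coeff (n j + k))) +
          ∑ i, monomial k ((v i).coeff (n i + k)) * u i j := by
        simp [w, mul_sub, Pi.single_apply, sub_add, add_comm k, monomial_mul_X_pow]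
      rw [hcol, ← mem_degreeLT]
      refine add_mem (mem_degreeLT.2 ((degree_lt_iff_coeff_zero _ _).2 fun m hm => ?_))
        (sum_mem fun i _ => mem_degreeLT.2 ?_)
      · rcases hm.eq_or_lt with rfl | hlt
        · simp
        · rw [coeff_sub, coeff_monomial_of_ne _ hlt.ne', sub_zero]
          exact (degree_lt_iff_coeff_zero _ _).1 (hv j) m hlt
      · calc _ ≤ (k : WithBot ℕ) + (u i j).degree :=
              (degree_mul_le _ _).trans (add_le_add_left (degree_monomial_le _ _) _)
          _ < k + n j := WithBot.add_lt_add_left (WithBot.natCast_ne_bot k) (hu i j)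
          _ = (n j + k : ℕ) := by rw [add_comm, Nat.cast_add]
  refine eq_top_iff.2 fun v _ => key (Finset.univ.sup fun j => (v j).natDegree + 1) v fun j => ?_
  refine degree_le_natDegree.trans_lt (Nat.cast_lt.2 ?_)
  have := Finset.le_sup (f := fun j => (v j).natDegree + 1) (Finset.mem_univ j)
  lia

end LeadingForm

section Local

variable {R : Type*} [CommRing R]

theorem finite_quotient_of_monic_smul_mem {M : Type*} [AddCommGroup M] [Module R M]
    [Module R[X] M] [IsScalarTower R R[X] M] [Module.Finite R[X] M] {ω : R[X]} (hω : ω.Monic)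
    (S : Submodule R[X] M) (hS : ∀ x, ω • x ∈ S) : Module.Finite R (M ⧸ S) := by
  obtain ⟨k, f, hf⟩ := Module.Finite.exists_fin' R[X] (M ⧸ S)
  have hker (v : Fin k → R[X]) : f (ω • v) = 0 := by
    obtain ⟨x, hx⟩ := S.mkQ_surjective (f v)
    rw [map_smul, ← hx, ← map_smul, Submodule.mkQ_apply, Submodule.Quotient.mk_eq_zero]
    exact hS x
  let ι := LinearMap.pi fun i : Fin k => (degreeLT R ω.natDegree).subtype ∘ₗ LinearMap.proj i
  refine .of_surjective (f.restrictScalars R ∘ₗ ι) fun y => ?_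
  obtain ⟨v, rfl⟩ := hf y
  nontriviality R
  have hmem (i : Fin k) : v i %ₘ ω ∈ degreeLT R ω.natDegree :=
    mem_degreeLT.2 ((degree_modByMonic_lt _ hω).trans_eq (degree_eq_natDegree hω.ne_zero))
  have hι : ι (fun i => ⟨_, hmem i⟩) = v - ω • fun i => v i /ₘ ω :=
    funext fun i => modByMonic_eq_sub_mul_div (v i) ω
  refine ⟨fun i => ⟨_, hmem i⟩, ?_⟩
  rw [LinearMap.comp_apply, hι, LinearMap.restrictScalars_apply, map_sub, hker, sub_zero]

theorem exists_monic_smul_mem_of_degreeLT_pi_sup_eq_top {r : ℕ} {n : Fin r → ℕ}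
    {N : Submodule R[X] (Fin r → R[X])}
    (h : Submodule.pi Set.univ (fun i => degreeLT R (n i)) ⊔ N.restrictScalars R = ⊤) :
    ∃ χ : R[X], χ.Monic ∧ ∀ v, χ • v ∈ N := by
  let ι := LinearMap.pi fun i : Fin r => (degreeLT R (n i)).subtype ∘ₗ LinearMap.proj i
  have hfin : Module.Finite R ((Fin r → R[X]) ⧸ N) := by
    refine .of_surjective (N.mkQ.restrictScalars R ∘ₗ ι) fun y => ?_
    obtain ⟨v, rfl⟩ := N.mkQ_surjective y
    obtain ⟨u, hu, w, hw, rfl⟩ := Submodule.mem_sup.1 (h.symm ▸ Submodule.mem_top : v ∈ _)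
    have hι : ι (fun i => ⟨u i, hu i trivial⟩) = u := rfl
    refine ⟨fun i => ⟨u i, hu i trivial⟩, (Submodule.Quotient.eq N).2 ?_⟩
    rw [hι, ← sub_sub, sub_self, zero_sub]
    exact N.neg_mem hw
  obtain ⟨χ, hχ, h0⟩ := LinearMap.exists_monic_and_aeval_eq_zero R
    (Algebra.lsmul R R ((Fin r → R[X]) ⧸ N) (X : R[X]))
  refine ⟨χ, hχ, fun v => (Submodule.Quotient.mk_eq_zero N).1 ?_⟩
  rw [aeval_algHom_apply, aeval_X_left_apply] at h0
  exact LinearMap.congr_fun h0 (N.mkQ v)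

variable [IsLocalRing R]

open IsLocalRing

theorem eq_top_of_monic_smul_mem_of_sup_smul_top {M : Type*} [AddCommGroup M] [Module R M]
    [Module R[X] M] [IsScalarTower R R[X] M] [Module.Finite R[X] M] {ω : R[X]} (hω : ω.Monic)
    (S : Submodule R[X] M) (hS : ∀ x, ω • x ∈ S) {T : Submodule R M}
    (hST : S.restrictScalars R ≤ T) (hT : ⊤ ≤ T ⊔ maximalIdeal R • ⊤) : T = ⊤ := by
  have := finite_quotient_of_monic_smul_mem hω S hS
  let q := S.mkQ.restrictScalars R
  have hq : LinearMap.range q = ⊤ := LinearMap.range_eq_top.2 S.mkQ_surjective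
  have hTq : ⊤ ≤ T.map q := by
    refine Submodule.le_of_le_smul_of_le_jacobson_bot Module.Finite.fg_top
      (maximalIdeal_le_jacobson ⊥) ?_
    simpa [Submodule.map_sup, Submodule.map_smul'', hq] using Submodule.map_mono (f := q) hT
  have hker : LinearMap.ker q ≤ T := fun x hx =>
    hST ((Submodule.Quotient.mk_eq_zero S).1 hx)
  rw [← sup_eq_left.2 hker, ← Submodule.comap_map_eq, top_le_iff.1 hTq, Submodule.comap_top]

theorem mem_maximalIdeal_smul_top_iff {r : ℕ} {v : Fin r → R[X]} :
    v ∈ maximalIdeal R • (⊤ : Submodule R (Fin r → R[X])) ↔ ∀ i, (v i).map (residue R) = 0 := by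
  have hker (x : R[X]) : x ∈ maximalIdeal R • (⊤ : Submodule R R[X]) ↔ x.map (residue R) = 0 := by
    rw [Ideal.smul_top_eq_map, Submodule.restrictScalars_mem, ← coe_mapRingHom, ← RingHom.mem_ker,
      ker_mapRingHom, ker_residue]
    rfl
  refine ⟨fun hv i => (hker _).1 ?_, fun hv => ?_⟩
  · exact Submodule.smul_top_le_comap_smul_top _ (LinearMap.proj i : _ →ₗ[R] R[X]) hv
  · rw [← LinearMap.sum_single_apply _ v]
    exact sum_mem fun i _ => Submodule.smul_top_le_comap_smul_top _
      (LinearMap.single R (fun _ => R[X]) i) ((hker _).2 (hv i))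

variable {r : ℕ} (L : Submodule R[X] (Fin r → R[X]))

/-- Since `ω` is regular modulo the maximal ideal, divisibility by the maximal ideal can be tested
after multiplying by `ω`, that is after passing from `L` to the ambient free module. -/
theorem mem_smul_top_of_map_residue_eq_zero [Module.Projective R[X] L] [Module.Finite R[X] L]
    {ω : R[X]} (hω : ω.Monic) (hL : ∀ v, ω • v ∈ L) {x : L}
    (hx : ∀ i, (x.1 i).map (residue R) = 0) : x ∈ maximalIdeal R • (⊤ : Submodule R L) := by
  obtain ⟨N, f, hf⟩ := Module.Finite.exists_fin' R[X] L
  obtain ⟨g, hfg⟩ := Module.projective_lifting_property f LinearMap.id hf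
  let m : (Fin r → R[X]) →ₗ[R[X]] L := (LinearMap.lsmul _ _ ω).codRestrict L hL
  have hm : m x = ω • x := rfl
  have hgx : g x ∈ maximalIdeal R • (⊤ : Submodule R (Fin N → R[X])) := by
    refine mem_maximalIdeal_smul_top_iff.2 fun i => ?_
    have hωgx : ω • g x ∈ maximalIdeal R • (⊤ : Submodule R (Fin N → R[X])) := by
      rw [← map_smul, ← hm]
      exact Submodule.smul_top_le_comap_smul_top _ ((g ∘ₗ m).restrictScalars R)
        (mem_maximalIdeal_smul_top_iff.2 hx)
    have hmul := mem_maximalIdeal_smul_top_iff.1 hωgx i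
    rw [Pi.smul_apply, smul_eq_mul, Polynomial.map_mul] at hmul
    exact (mul_eq_zero.1 hmul).resolve_left (hω.map _).ne_zero
  rw [← LinearMap.id_apply (R := R[X]) x, ← hfg]
  exact Submodule.smul_top_le_comap_smul_top _ (f.restrictScalars R) hgx

/-- The coefficientwise reduction of vectors of polynomials modulo the maximal ideal. -/
noncomputable def residueVec (R : Type*) [CommRing R] [IsLocalRing R] (r : ℕ) :
    (Fin r → R[X]) →ₛₗ[mapRingHom (residue R)] (Fin r → (ResidueField R)[X]) where
  toFun v i := (v i).map (residue R)
  map_add' _ _ := funext fun _ => Polynomial.map_add _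
  map_smul' _ _ := funext fun _ => Polynomial.map_mul _

theorem residueVec_surjective : Function.Surjective (residueVec R r) := fun u =>
  ⟨fun i => (map_surjective _ residue_surjective (u i)).choose,
    funext fun i => (map_surjective _ residue_surjective (u i)).choose_spec⟩

theorem exists_residueVec_eq {n : Fin r → ℕ} (u : Fin r → (ResidueField R)[X])
    (hu : ∀ i, (u i).degree < n i) :
    ∃ v : Fin r → R[X], (∀ i, (v i).degree < n i) ∧ residueVec R r v = u := by
  choose v hv hdeg using fun i => exists_degree_eq_of_mem_lifts
    ((mem_lifts _).2 (map_surjective _ residue_surjective (u i)))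
  exact ⟨v, fun i => (hdeg i).trans_lt (hu i), funext hv⟩

instance : RingHomSurjective (mapRingHom (residue R)) :=
  ⟨map_surjective _ residue_surjective⟩

theorem exists_degree_bounds_of_monic_smul_mem {ω : R[X]} (hω : ω.Monic)
    (hL : ∀ v, ω • v ∈ L) :
    ∃ n : Fin r → ℕ, Submodule.pi Set.univ (fun i => degreeLT R (n i)) ⊔ L.restrictScalars R = ⊤ ∧
      ∀ v ∈ L, (∀ i, (v i).degree < n i) → ∀ i, (v i).map (residue R) = 0 := by
  obtain ⟨n, hex, huniq⟩ := exists_degree_bounds_of_smul_mem (hω.map (residue R)).ne_zero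
    (L.map (residueVec R r)) fun v => by
      obtain ⟨v, rfl⟩ := residueVec_surjective v
      exact ⟨ω • v, hL v, (residueVec R r).map_smulₛₗ ω v⟩
  refine ⟨n, ?_, fun v hv hdeg => congrFun (huniq _ ⟨v, hv, rfl⟩ fun i => ?_)⟩
  · refine eq_top_of_monic_smul_mem_of_sup_smul_top hω L hL le_sup_right fun v _ => ?_
    obtain ⟨_, hu, l, hl, hul⟩ := hex (residueVec R r v)
    obtain ⟨u, hdeg, rfl⟩ := exists_residueVec_eq _ hu
    rw [show v = u + l + (v - u - l) by abel]
    refine Submodule.add_mem_sup (Submodule.add_mem_sup (by simpa [mem_degreeLT] using hdeg) hl)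
      (mem_maximalIdeal_smul_top_iff.2 (congrFun (?_ : residueVec R r (v - u - l) = 0)))
    rw [map_sub, map_sub, ← hul, sub_self]
  · exact degree_map_le.trans_lt (hdeg i)

theorem free_of_monic_smul_mem [Module.Projective R[X] L] [Module.Finite R[X] L]
    {ω : R[X]} (hω : ω.Monic) (hL : ∀ v, ω • v ∈ L) : Module.Free R[X] L := by
  obtain ⟨n, htop, hres⟩ := exists_degree_bounds_of_monic_smul_mem L hω hL
  have hlead (i) : ∃ u : Fin r → R[X], (∀ j, (u j).degree < n j) ∧
      Pi.single i (X ^ n i) - u ∈ L := by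
    obtain ⟨u, hu, l, hl, hul⟩ := Submodule.mem_sup.1
      (htop.symm ▸ Submodule.mem_top : Pi.single i (X ^ n i) ∈ _)
    exact ⟨u, by simpa [mem_degreeLT] using hu, by rwa [← hul, add_sub_cancel_left]⟩
  choose u hu huL using hlead
  set N := Submodule.span R[X] (Set.range fun i => Pi.single i (X ^ n i) - u i)
  have hsup := degreeLT_pi_sup_span_eq_top hu
  have hNL : N ≤ L := Submodule.span_le.2 (Set.range_subset_iff.2 huL)
  have hLN : L = N := by
    refine le_antisymm ?_ hNL
    obtain ⟨χ, hχ, hχN⟩ := exists_monic_smul_mem_of_degreeLT_pi_sup_eq_top hsup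
    have hcomap : (N.comap L.subtype).restrictScalars R = ⊤ := by
      refine eq_top_of_monic_smul_mem_of_sup_smul_top hχ (N.comap L.subtype) (fun x => hχN x)
        le_rfl fun x _ => ?_
      obtain ⟨d, hd, y, hy, hdy⟩ := Submodule.mem_sup.1 (hsup.symm ▸ Submodule.mem_top : x.1 ∈ _)
      have hdL : d ∈ L := by simpa [← hdy] using L.sub_mem x.2 (hNL hy)
      rw [show x = ⟨y, hNL hy⟩ + ⟨d, hdL⟩ from Subtype.ext (hdy.symm.trans (add_comm _ _))]
      exact Submodule.add_mem_sup hy (mem_smul_top_of_map_residue_eq_zero L hω hL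
        (hres d hdL fun i => mem_degreeLT.1 (hd i trivial)))
    intro x hx
    exact (hcomap.symm ▸ Submodule.mem_top : (⟨x, hx⟩ : L) ∈ _)
  rw [hLN]
  exact .of_basis (Module.Basis.span (linearIndependent_single_X_pow_sub hu))

theorem SplitsAway.isFreeIdem_of_isLocalRing {m : Type*} [Fintype m] {e : Matrix m m R[X]}
    (he : IsIdempotentElem e) {ω : R[X]} (hω : ω.Monic) (h : SplitsAway ω e) : IsFreeIdem e := by
  classical
  obtain ⟨r, a, b, hab, hba⟩ := h
  have hreg {k l : Type _} {x y : Matrix k l R[X]} (hxy : ω • x = ω • y) : x = y :=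
    Matrix.ext fun i j => hω.isRegular.left (congrFun₂ hxy i j)
  have hbe : b * e = b := hreg (by rw [← Matrix.mul_smul, ← hab, ← Matrix.mul_assoc, hba]; simp)
  let P := LinearMap.range (Matrix.toLin' e)
  have : Module.Projective R[X] P := .of_split P.subtype (Matrix.toLin' e).rangeRestrict (by
    ext ⟨_, y, rfl⟩ : 2
    simp [he.eq])
  let f := Matrix.toLin' b ∘ₗ P.subtype
  have hf : Function.Injective f := by
    refine LinearMap.ker_eq_bot.1 (LinearMap.ker_eq_bot'.2 ?_)
    rintro ⟨_, y, rfl⟩ hy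
    have hy' : (b * e) *ᵥ y = 0 := by simpa [f] using hy
    have hωy : ω • e *ᵥ y = 0 := by
      rw [← Matrix.smul_mulVec, ← hab, ← Matrix.mulVec_mulVec, ← hbe, hy', Matrix.mulVec_zero]
    exact Subtype.ext (funext fun i => (hω.isRegular.left.mul_left_eq_zero_iff).1 (congrFun hωy i))
  let φ : P ≃ₗ[R[X]] LinearMap.range f := .ofInjective f hf
  have : Module.Projective R[X] (LinearMap.range f) := .of_equiv φ
  have := free_of_monic_smul_mem (LinearMap.range f) hω fun v =>
    ⟨⟨Matrix.toLin' e (a *ᵥ v), _, rfl⟩, by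
      simp [f, ← Matrix.mul_assoc, hbe, hba, Matrix.smul_mulVec]⟩
  have : Module.Free R[X] P := .of_equiv φ.symm
  exact isFreeIdem_of_free_range he

end Local

theorem SplitsAway.isFreeIdem {R : Type*} [CommRing R] [IsDomain R] (hR : ProjectivesFree R)
    {m : Type*} [Fintype m] {e : Matrix m m R[X]} (he : IsIdempotentElem e) {ω : R[X]}
    (hω : ω.Monic) (h : SplitsAway ω e) : IsFreeIdem e :=
  hR.isFreeIdem_of_locally_free he fun p _ =>
    (h.map (mapRingHom (algebraMap R (Localization.AtPrime p)))).isFreeIdem_of_isLocalRing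
      (isIdempotentElem_map he _) (hω.map _)

/-! ### Descent along Weierstrass division -/

section Factorizations

variable {A : Type*} [CommRing A] {l m n : Type*} [Fintype l] [Fintype m] [Fintype n]
  [DecidableEq l] {s : A} {e : Matrix m m A} {f : Matrix n n A} {a : Matrix m l A}
  {b : Matrix l m A} {c : Matrix n l A} {d : Matrix l n A}

theorem isIdempotentElem_of_mul_eq_smul (hs : IsLeftRegular s) (hab : a * b = s • e)
    (hba : b * a = s • 1) : IsIdempotentElem e := by
  refine (hs.pow 2).isSMulRegular.matrix ?_
  calc s ^ 2 • (e * e) = s • e * s • e := by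
        rw [Matrix.smul_mul, Matrix.mul_smul, smul_smul, sq]
    _ = a * (b * a) * b := by simp only [← hab, Matrix.mul_assoc]
    _ = s ^ 2 • e := by
        rw [hba, Matrix.mul_smul, Matrix.mul_one, Matrix.smul_mul, hab, smul_smul, sq]

theorem IdemEquiv.of_mul_eq_smul (hs : IsLeftRegular s) (hab : a * b = s • e)
    (hba : b * a = s • 1) (hcd : c * d = s • f) (hdc : d * c = s • 1) {g : Matrix m n A}
    {g' : Matrix n m A} (hg : a * d = s • g) (hg' : c * b = s • g') : IdemEquiv e f := by
  refine ⟨g, g', (hs.pow 2).isSMulRegular.matrix ?_, (hs.pow 2).isSMulRegular.matrix ?_⟩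
  · calc s ^ 2 • (g * g') = s • g * s • g' := by
          rw [Matrix.smul_mul, Matrix.mul_smul, smul_smul, sq]
      _ = a * (d * c) * b := by simp only [← hg, ← hg', Matrix.mul_assoc]
      _ = s ^ 2 • e := by
          rw [hdc, Matrix.mul_smul, Matrix.mul_one, Matrix.smul_mul, hab, smul_smul, sq]
  · calc s ^ 2 • (g' * g) = s • g' * s • g := by
          rw [Matrix.smul_mul, Matrix.mul_smul, smul_smul, sq]
      _ = c * (b * a) * d := by simp only [← hg, ← hg', Matrix.mul_assoc]
      _ = s ^ 2 • f := by
          rw [hba, Matrix.mul_smul, Matrix.mul_one, Matrix.smul_mul, hcd, smul_smul, sq]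

end Factorizations

theorem smul_fromRows {A m n l : Type*} [Mul A] (s : A) (a : Matrix m l A) (b : Matrix n l A) :
    s • Matrix.fromRows a b = Matrix.fromRows (s • a) (s • b) := by
  ext (i | i) j <;> rfl

theorem smul_fromCols {A m n l : Type*} [Mul A] (s : A) (a : Matrix l m A) (b : Matrix l n A) :
    s • Matrix.fromCols a b = Matrix.fromCols (s • a) (s • b) := by
  ext i (j | j) <;> rfl

/-- Weierstrass division by `ω` along `σ : R[X] → A`: it induces an isomorphism
`R[X] / (ω) ≅ A / (σ ω)`, and `σ ω` is regular. -/
structure WeierstrassDivision {R A : Type*} [CommRing R] [CommRing A] (σ : R[X] →+* A)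
    (ω : R[X]) : Prop where
  isLeftRegular : IsLeftRegular (σ ω)
  exists_eq_mul_add (x : A) : ∃ q p, x = σ ω * q + σ p
  dvd_of_eq_mul {p : R[X]} {q : A} : σ p = σ ω * q → ω ∣ p

namespace WeierstrassDivision

variable {R A : Type*} [CommRing R] [CommRing A] {σ : R[X] →+* A} {ω : R[X]}
  (h : WeierstrassDivision σ ω) {l m n : Type*}

include h

theorem exists_eq_pow_mul_add (k : ℕ) (x : A) : ∃ q p, x = σ ω ^ k * q + σ p := by
  induction k with
  | zero => exact ⟨x, 0, by simp⟩
  | succ k ih =>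
    obtain ⟨q, p, rfl⟩ := ih
    obtain ⟨q', p', rfl⟩ := h.exists_eq_mul_add q
    exact ⟨q', ω ^ k * p' + p, by rw [map_add, map_mul, map_pow]; ring⟩

theorem pow_dvd_of_eq_mul (k : ℕ) {p : R[X]} {q : A} (hp : σ p = σ ω ^ k * q) : ω ^ k ∣ p := by
  induction k generalizing p with
  | zero => simp
  | succ k ih =>
    obtain ⟨p', rfl⟩ := h.dvd_of_eq_mul (hp.trans (by rw [pow_succ', mul_assoc]))
    rw [pow_succ']
    refine mul_dvd_mul_left ω (ih (h.isLeftRegular ?_))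
    simpa only [map_mul, pow_succ', mul_assoc] using hp

theorem exists_matrix_eq_add (k : ℕ) (a : Matrix m n A) :
    ∃ (a₀ : Matrix m n A) (a' : Matrix m n R[X]), a'.map σ = a - σ ω ^ k • a₀ := by
  choose a₀ a' h' using fun i j => h.exists_eq_pow_mul_add k (a i j)
  exact ⟨.of a₀, .of a', by ext i j; simp [h' i j]⟩

theorem exists_matrix_eq_smul (k : ℕ) {a : Matrix m n R[X]} {a₀ : Matrix m n A}
    (ha : a.map σ = σ ω ^ k • a₀) : ∃ a' : Matrix m n R[X], a = ω ^ k • a' := by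
  choose a' h' using fun i j => h.pow_dvd_of_eq_mul k (congrFun₂ ha i j)
  exact ⟨.of a', Matrix.ext h'⟩

variable [Fintype m]

/-- A factorization of `σ ω • e` over `A` is approximated modulo `(σ ω)²` by one over `R[X]`,
which becomes exact after adding a correction block. -/
theorem exists_factorization [Fintype l] [DecidableEq l] {e : Matrix m m A} {a : Matrix m l A}
    {b : Matrix l m A} (hab : a * b = σ ω • e) (hba : b * a = σ ω • 1) :
    ∃ (c : Matrix (m ⊕ l) l R[X]) (d : Matrix l (m ⊕ l) R[X]) (f : Matrix (m ⊕ l) (m ⊕ l) R[X]),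
      c * d = ω • f ∧ d * c = ω • 1 ∧ (∃ g, a * d.map σ = σ ω • g) ∧
        ∃ g, c.map σ * b = σ ω • g := by
  obtain ⟨a₀, a', ha'⟩ := h.exists_matrix_eq_add 2 a
  obtain ⟨b₀, b', hb'⟩ := h.exists_matrix_eq_add 2 b
  obtain ⟨Y, hY⟩ := h.exists_matrix_eq_smul 1 (a := a' * b')
    (a₀ := e - σ ω • (a * b₀ + a₀ * b - σ ω ^ 2 • (a₀ * b₀))) (by
      rw [Matrix.map_mul, ha', hb']
      simp only [Matrix.sub_mul, Matrix.mul_sub, Matrix.smul_mul, Matrix.mul_smul, hab]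
      module)
  obtain ⟨Z, hZ⟩ := h.exists_matrix_eq_smul 2 (a := ω • 1 - b' * a')
    (a₀ := b * a₀ + b₀ * a - σ ω ^ 2 • (b₀ * a₀)) (by
      rw [Matrix.map_sub _ (map_sub σ), Matrix.map_mul, Matrix.map_smul' _ _ _ (map_mul σ), ha',
        hb', Matrix.map_one _ (map_zero σ) (map_one σ)]
      simp only [Matrix.sub_mul, Matrix.mul_sub, Matrix.smul_mul, Matrix.mul_smul, hba]
      module)
  refine ⟨.fromRows a' (ω • Z), .fromCols b' (ω • 1), .fromBlocks Y a' (Z * b') (ω • Z),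
    ?_, ?_, ⟨.fromCols (e - σ ω • (a * b₀)) a, ?_⟩,
    ⟨.fromRows (e - σ ω • (a₀ * b)) (Z.map σ * b), ?_⟩⟩
  · rw [Matrix.fromRows_mul_fromCols, hY, Matrix.fromBlocks_smul, pow_one]
    simp only [Matrix.mul_smul, Matrix.smul_mul, Matrix.mul_one]
  · rw [Matrix.fromCols_mul_fromRows, Matrix.smul_mul, Matrix.one_mul, smul_smul, ← sq, ← hZ,
      add_sub_cancel]
  · rw [Matrix.fromCols_map, Matrix.mul_fromCols, smul_fromCols, hb',
      Matrix.map_smul' _ _ _ (map_mul σ), Matrix.map_one _ (map_zero σ) (map_one σ)]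
    simp only [Matrix.mul_sub, Matrix.mul_smul, Matrix.mul_one, hab, smul_sub, smul_smul, sq]
  · rw [Matrix.fromRows_map, Matrix.fromRows_mul, smul_fromRows, ha',
      Matrix.map_smul' _ _ _ (map_mul σ)]
    simp only [Matrix.sub_mul, Matrix.smul_mul, hab, smul_sub, smul_smul, sq]

theorem isFreeIdem [IsDomain R] (hR : ProjectivesFree R) (hω : ω.Monic) {e : Matrix m m A}
    (he : SplitsAway (σ ω) e) : IsFreeIdem e := by
  obtain ⟨r, a, b, hab, hba⟩ := he
  obtain ⟨c, d, f, hcd, hdc, ⟨g, hg⟩, ⟨g', hg'⟩⟩ := h.exists_factorization hab hba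
  have hf := isIdempotentElem_of_mul_eq_smul hω.isRegular.left hcd hdc
  have hfree : IsFreeIdem f := SplitsAway.isFreeIdem hR hf hω ⟨r, c, d, hcd, hdc⟩
  refine .of_equiv (isIdempotentElem_of_mul_eq_smul h.isLeftRegular hab hba)
    (.of_mul_eq_smul h.isLeftRegular hab hba ?_ ?_ hg hg') (hfree.map σ)
  · rw [← Matrix.map_mul, hcd, Matrix.map_smul' _ _ _ (map_mul σ)]
  · rw [← Matrix.map_mul, hdc, Matrix.map_smul' _ _ _ (map_mul σ),
      Matrix.map_one _ (map_zero σ) (map_one σ)]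

end WeierstrassDivision

/-! ### Weierstrass division and preparation -/

theorem bijective_of_nnnorm_sub_self_le {F : Type*} [NormedAddCommGroup F] [CompleteSpace F]
    {T : F →+ F} {θ : ℝ≥0} (hθ : θ < 1) (h : ∀ y, ‖T y - y‖₊ ≤ θ * ‖y‖₊) :
    Function.Bijective T := by
  have hcontr (y : F) : ContractingWith θ fun x => y - (T x - x) := by
    refine ⟨hθ, LipschitzWith.of_dist_le_mul fun x x' => ?_⟩
    have : y - (T x - x) - (y - (T x' - x')) = -(T (x - x') - (x - x')) := by
      rw [map_sub]; abel
    rw [dist_eq_norm, dist_eq_norm, this, norm_neg]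
    exact h (x - x')
  constructor
  · refine (injective_iff_map_eq_zero T).2 fun x hx => ?_
    have hle : ‖x‖₊ ≤ θ * ‖x‖₊ := by simpa [hx] using h x
    by_contra hx0
    exact absurd hle (mul_lt_of_lt_one_left (nnnorm_pos.2 hx0) hθ).not_ge
  · intro y
    have hfix : y - (T _ - _) = _ := (hcontr y).fixedPoint_isFixedPt
    rw [sub_sub_eq_add_sub, sub_eq_iff_eq_add, add_comm] at hfix
    exact ⟨_, (add_left_cancel hfix).symm⟩

theorem bijective_of_nnnorm_sub_le {X F : Type*} [AddCommGroup X] [NormedAddCommGroup F]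
    [CompleteSpace F] {φ ψ : X →+ F} (hφ : Function.Bijective φ) {θ : ℝ≥0} (hθ : θ < 1)
    (h : ∀ x, ‖ψ x - φ x‖₊ ≤ θ * ‖φ x‖₊) : Function.Bijective ψ := by
  let e := AddEquiv.ofBijective φ hφ
  have hT : Function.Bijective (ψ.comp e.symm.toAddMonoidHom) :=
    bijective_of_nnnorm_sub_self_le hθ fun y => by
      simpa [show φ (e.symm y) = y from e.apply_symm_apply y] using h (e.symm y)
  exact (Function.Bijective.of_comp_iff ψ e.symm.bijective).1 hT

section Division

variable {R A : Type*} [CommRing R] [CommRing A]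

/-- Division with remainder by `h` in an `R[X]`-algebra `A`, as the map sending a quotient `q` and
a remainder `∑ i < d, r i X ^ i` to `q * h + ∑ i < d, r i X ^ i`. -/
noncomputable def divisionMap (σ : R[X] →+* A) (d : ℕ) (h : A) : A × (Fin d → R) →+ A :=
  (AddMonoidHom.mulRight h).coprod <| σ.toAddMonoidHom.comp <|
    (degreeLT R d).subtype.toAddMonoidHom.comp (degreeLTEquiv R d).symm.toLinearMap.toAddMonoidHom

theorem divisionMap_apply (σ : R[X] →+* A) (d : ℕ) (h : A) (x : A × (Fin d → R)) :
    divisionMap σ d h x = x.1 * h + σ ((degreeLTEquiv R d).symm x.2 : R[X]) :=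
  rfl

theorem exists_divisionMap_eq (σ : R[X] →+* A) (d : ℕ) (h q : A) {p : R[X]} (hp : p.degree < d) :
    ∃ r, ((degreeLTEquiv R d).symm r : R[X]) = p ∧ divisionMap σ d h (q, r) = q * h + σ p := by
  have hr : ((degreeLTEquiv R d).symm (degreeLTEquiv R d ⟨p, mem_degreeLT.2 hp⟩) : R[X]) = p := by
    rw [LinearEquiv.symm_apply_apply]
  exact ⟨_, hr, by rw [divisionMap_apply, hr]⟩

theorem degree_degreeLTEquiv_symm_lt {d : ℕ} (r : Fin d → R) :
    ((degreeLTEquiv R d).symm r : R[X]).degree < d :=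
  mem_degreeLT.1 ((degreeLTEquiv R d).symm r).2

theorem WeierstrassDivision.of_bijective [Nontrivial R] {σ : R[X] →+* A} {ω : R[X]} (hω : ω.Monic)
    (h : Function.Bijective (divisionMap σ ω.natDegree (σ ω))) : WeierstrassDivision σ ω where
  isLeftRegular x y hxy := by
    have : divisionMap σ ω.natDegree (σ ω) (x, 0) = divisionMap σ ω.natDegree (σ ω) (y, 0) := by
      simpa [divisionMap_apply, mul_comm] using hxy
    exact congr_arg Prod.fst (h.1 this)
  exists_eq_mul_add x := by
    obtain ⟨⟨q, r⟩, rfl⟩ := h.2 x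
    exact ⟨q, _, by rw [divisionMap_apply, mul_comm]⟩
  dvd_of_eq_mul {p q} hpq := by
    have hdeg : (p %ₘ ω).degree < ω.natDegree := by
      rw [← degree_eq_natDegree hω.ne_zero]
      exact degree_modByMonic_lt p hω
    obtain ⟨r, hr, hdiv⟩ := exists_divisionMap_eq σ _ (σ ω) (σ (p /ₘ ω)) hdeg
    have heq : divisionMap σ ω.natDegree (σ ω) (σ (p /ₘ ω), r) =
        divisionMap σ ω.natDegree (σ ω) (q, 0) := by
      rw [hdiv, ← map_mul, ← map_add, mul_comm, add_comm, modByMonic_add_div, hpq,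
        divisionMap_apply, map_zero, ZeroMemClass.coe_zero, map_zero, add_zero, mul_comm]
    have hr0 : r = 0 := congr_arg Prod.snd (h.1 heq)
    rw [← modByMonic_eq_zero_iff_dvd hω, ← hr, hr0, map_zero, ZeroMemClass.coe_zero]

end Division

section Norm

variable {R A : Type*} [NormedCommRing R] [NormedCommRing A] {σ : R[X] →+* A} {d : ℕ} {P h : A}

theorem continuous_divisionMap (hσ : Continuous fun r => σ (C r)) :
    Continuous (divisionMap σ d h) := by
  have hsum (r : Fin d → R) : σ ((degreeLTEquiv R d).symm r : R[X]) =
      ∑ i, σ (C (r i)) * σ X ^ (i : ℕ) := by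
    change σ (∑ i : Fin d, monomial i (r i)) = _
    simp only [map_sum, ← C_mul_X_pow_eq_monomial, map_mul, map_pow]
  simp only [show ⇑(divisionMap σ d h) = _ from funext (divisionMap_apply σ d h), hsum]
  have hcoeff (i : Fin d) : Continuous fun x : A × (Fin d → R) => σ (C (x.2 i)) :=
    hσ.comp (by fun_prop)
  exact (continuous_fst.mul continuous_const).add
    (continuous_finsetSum _ fun i _ => (hcoeff i).mul continuous_const)

theorem bijective_divisionMap [CompleteSpace R] [CompleteSpace A] [IsUltrametricDist A]
    (hσ : Continuous fun r => σ (C r)) (hP : P ≠ 0)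
    (hq : ∀ x, ‖x.1‖₊ * ‖P‖₊ ≤ ‖divisionMap σ d P x‖₊) {c : ℝ≥0}
    (hr : ∀ r, ‖r‖₊ ≤ c * ‖divisionMap σ d P (0, r)‖₊) (hdense : DenseRange (divisionMap σ d P)) :
    Function.Bijective (divisionMap σ d P) := by
  have hP' : 0 < ‖P‖₊ := nnnorm_pos.2 hP
  have hbound (x : A × (Fin d → R)) : ‖x‖₊ ≤ max ‖P‖₊⁻¹ c * ‖divisionMap σ d P x‖₊ := by
    have hrem : ‖divisionMap σ d P (0, x.2)‖₊ ≤ ‖divisionMap σ d P x‖₊ := by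
      have : divisionMap σ d P (0, x.2) = divisionMap σ d P x - x.1 * P := by
        simp [divisionMap_apply]
      rw [this, sub_eq_add_neg]
      refine (IsUltrametricDist.nnnorm_add_le_max _ _).trans ?_
      rw [nnnorm_neg]
      exact (max_le le_rfl ((nnnorm_mul_le _ _).trans (hq x)))
    rw [Prod.nnnorm_def]
    refine max_le ?_ ?_
    · refine .trans ?_ (mul_le_mul_left (le_max_left _ _) _)
      rw [inv_mul_eq_div, le_div_iff₀ hP']
      exact hq x
    · exact (hr x.2).trans (mul_le_mul' (le_max_right _ _) hrem)
  have hanti := AddMonoidHomClass.antilipschitz_of_bound (divisionMap σ d P) hbound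
  have hclosed := hanti.isClosed_range
    (uniformContinuous_addMonoidHom_of_continuous (continuous_divisionMap hσ))
  exact ⟨hanti.injective, Set.range_eq_univ.1 (hclosed.closure_eq ▸ hdense.closure_range)⟩

theorem bijective_divisionMap_of_nnnorm_sub_lt [CompleteSpace A]
    (hq : ∀ x, ‖x.1‖₊ * ‖P‖₊ ≤ ‖divisionMap σ d P x‖₊)
    (hbij : Function.Bijective (divisionMap σ d P)) (hh : ‖h - P‖₊ < ‖P‖₊) :
    Function.Bijective (divisionMap σ d h) := by
  have hP : 0 < ‖P‖₊ := pos_of_gt hh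
  refine bijective_of_nnnorm_sub_le hbij (θ := ‖h - P‖₊ / ‖P‖₊) ((div_lt_one₀ hP).2 hh)
    fun x => ?_
  calc ‖divisionMap σ d h x - divisionMap σ d P x‖₊
      = ‖x.1 * (h - P)‖₊ := by simp only [divisionMap_apply]; congr 1; ring
    _ ≤ ‖x.1‖₊ * ‖h - P‖₊ := nnnorm_mul_le _ _
    _ = ‖h - P‖₊ / ‖P‖₊ * (‖x.1‖₊ * ‖P‖₊) := by field_simp
    _ ≤ _ := by gcongr; exact hq x

theorem nnnorm_one_le_one_of_divisionMap (hP : 0 < ‖P‖₊)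
    (hq : ∀ x, ‖x.1‖₊ * ‖P‖₊ ≤ ‖divisionMap σ d P x‖₊) : ‖(1 : A)‖₊ ≤ 1 := by
  have h1 := hq (1, 0)
  rw [divisionMap_apply, map_zero, ZeroMemClass.coe_zero, map_zero, add_zero, one_mul] at h1
  exact le_of_mul_le_mul_right (by simpa using h1) hP

theorem nnnorm_sub_one_lt_one_of_divisionMap_eq [IsUltrametricDist A]
    (hq : ∀ x, ‖x.1‖₊ * ‖P‖₊ ≤ ‖divisionMap σ d P x‖₊) (hh : ‖h - P‖₊ < ‖P‖₊) {q : A}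
    {r : Fin d → R} (hqr : divisionMap σ d h (q, r) = P) : ‖q - 1‖₊ < 1 := by
  have hle : ‖q - 1‖₊ * ‖P‖₊ ≤ ‖q‖₊ * ‖h - P‖₊ := by
    have hdiv : divisionMap σ d P (q - 1, r) = q * (P - h) := by
      rw [divisionMap_apply] at hqr ⊢
      linear_combination hqr
    refine (hq (q - 1, r)).trans ?_
    rw [hdiv, ← nnnorm_neg (h - P), neg_sub]
    exact nnnorm_mul_le _ _
  by_contra! hge
  have hone := nnnorm_one_le_one_of_divisionMap (pos_of_gt hh) hq
  have hqle : ‖q‖₊ ≤ ‖q - 1‖₊ := by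
    simpa using (IsUltrametricDist.nnnorm_add_le_max (q - 1) 1).trans
      (max_le le_rfl (hone.trans hge))
  exact absurd (hle.trans (mul_le_mul_left hqle _))
    (mul_lt_mul_of_pos_left hh (one_pos.trans_le hge)).not_ge

/-- Dividing the approximation `σ p` of `h` by `h` leaves a remainder `r`, and `p - r` is the
Weierstrass polynomial of `h`. -/
theorem exists_weierstrassDivision [Nontrivial R] [CompleteSpace A] [IsUltrametricDist A]
    {p : R[X]} (hp : p.Monic)
    (hq : ∀ x, ‖x.1‖₊ * ‖σ p‖₊ ≤ ‖divisionMap σ p.natDegree (σ p) x‖₊)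
    (hbij : Function.Bijective (divisionMap σ p.natDegree (σ p))) (hh : ‖h - σ p‖₊ < ‖σ p‖₊) :
    ∃ ω : R[X], ω.Monic ∧ WeierstrassDivision σ ω ∧ ∃ u : Aˣ, σ ω = u * h := by
  have hP : 0 < ‖σ p‖₊ := pos_of_gt hh
  obtain ⟨⟨q, r⟩, hqr⟩ := (bijective_divisionMap_of_nnnorm_sub_lt hq hbij hh).2 (σ p)
  have hlt := nnnorm_sub_one_lt_one_of_divisionMap_eq hq hh hqr
  have hdeg := degree_degreeLTEquiv_symm_lt r
  rw [← degree_eq_natDegree hp.ne_zero] at hdeg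
  rw [divisionMap_apply] at hqr
  set r' : R[X] := ((degreeLTEquiv R p.natDegree).symm r : R[X])
  have hunit : IsUnit q := by
    simpa using isUnit_one_sub_of_norm_lt_one (x := 1 - q) (by rwa [norm_sub_rev])
  have hσω : σ (p - r') = q * h := by rw [map_sub, ← hqr, add_sub_cancel_right]
  have hclose : ‖σ (p - r') - σ p‖₊ < ‖σ p‖₊ := by
    have hq1 : ‖q‖₊ ≤ 1 := by
      simpa using (IsUltrametricDist.nnnorm_add_le_max (q - 1) 1).trans
        (max_le hlt.le (nnnorm_one_le_one_of_divisionMap hP hq))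
    have hsplit : σ (p - r') - σ p = (q - 1) * σ p + q * (h - σ p) := by rw [hσω]; ring
    rw [hsplit]
    refine (IsUltrametricDist.nnnorm_add_le_max _ _).trans_lt (max_lt ?_ ?_)
    · exact (nnnorm_mul_le _ _).trans_lt (mul_lt_of_lt_one_left hP hlt)
    · exact (nnnorm_mul_le _ _).trans_lt ((mul_le_of_le_one_left' hq1).trans_lt hh)
  have hω : (p - r').Monic := hp.sub_of_left hdeg
  refine ⟨p - r', hω, .of_bijective hω ?_, hunit.unit, hσω⟩
  rw [natDegree_eq_of_degree_eq (degree_sub_eq_left_of_degree_lt hdeg)]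
  exact bijective_divisionMap_of_nnnorm_sub_lt hq hbij hclose

end Norm

/-! ### Gauss norms -/

/-- A multiplicative weight on a monoid of exponents, such as `(i, j) ↦ γ ^ i * ρ ^ j`. -/
structure Weight (I : Type*) [AddCommMonoid I] where
  toFun : I → ℝ≥0
  map_zero : toFun 0 = 1
  map_add : ∀ a b, toFun (a + b) = toFun a * toFun b
  ne_zero : ∀ a, toFun a ≠ 0

instance (I : Type*) [AddCommMonoid I] : CoeFun (Weight I) fun _ => I → ℝ≥0 :=
  ⟨Weight.toFun⟩

theorem Weight.pos {I : Type*} [AddCommMonoid I] (w : Weight I) (i : I) : 0 < w i :=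
  pos_iff_ne_zero.2 (w.ne_zero i)

theorem Weight.map_nsmul {I : Type*} [AddCommMonoid I] (w : Weight I) (k : ℕ) (i : I) :
    w (k • i) = w i ^ k := by
  induction k with
  | zero => rw [zero_smul, w.map_zero, pow_zero]
  | succ k ih => rw [succ_nsmul, w.map_add, ih, pow_succ]

section GaussNorm

variable {K I : Type*} [NormedField K] [AddCommMonoid I] (w : Weight I)

/-- The weighted Gauss norm of a polynomial. -/
noncomputable def gaussNorm (f : AddMonoidAlgebra K I) : ℝ≥0 :=
  f.coeff.support.sup fun i => ‖f.coeff i‖₊ * w i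

/-- The exponents of the terms of maximal weighted norm of a polynomial. -/
noncomputable def dominantSupport (f : AddMonoidAlgebra K I) : Finset I :=
  {i ∈ f.coeff.support | ‖f.coeff i‖₊ * w i = gaussNorm w f}

theorem le_gaussNorm (f : AddMonoidAlgebra K I) (i : I) : ‖f.coeff i‖₊ * w i ≤ gaussNorm w f := by
  by_cases hi : i ∈ f.coeff.support
  · exact Finset.le_sup (f := fun i => ‖f.coeff i‖₊ * w i) hi
  · simp [Finsupp.notMem_support_iff.1 hi]

variable {w} in
theorem gaussNorm_le {f : AddMonoidAlgebra K I} {c : ℝ≥0} (h : ∀ i, ‖f.coeff i‖₊ * w i ≤ c) :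
    gaussNorm w f ≤ c :=
  Finset.sup_le fun i _ => h i

@[simp]
theorem gaussNorm_zero : gaussNorm w (0 : AddMonoidAlgebra K I) = 0 := by
  simp [gaussNorm]

theorem dominantSupport_nonempty {f : AddMonoidAlgebra K I} (hf : f ≠ 0) :
    (dominantSupport w f).Nonempty := by
  have hne : f.coeff.support.Nonempty := by
    rw [Finsupp.support_nonempty_iff]; simpa using hf
  obtain ⟨i, hi, h⟩ := Finset.exists_mem_eq_sup f.coeff.support hne fun i => ‖f.coeff i‖₊ * w i
  exact ⟨i, Finset.mem_filter.2 ⟨hi, h.symm⟩⟩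

variable {w} in
theorem nnnorm_coeff_mul_of_mem_dominantSupport {f : AddMonoidAlgebra K I} {i : I}
    (hi : i ∈ dominantSupport w f) : ‖f.coeff i‖₊ * w i = gaussNorm w f :=
  (Finset.mem_filter.1 hi).2

variable {w} in
theorem ne_zero_of_mem_dominantSupport {f : AddMonoidAlgebra K I} {i : I}
    (hi : i ∈ dominantSupport w f) : f ≠ 0 := by
  rintro rfl
  simp [dominantSupport] at hi

theorem gaussNorm_pos {f : AddMonoidAlgebra K I} (hf : f ≠ 0) : 0 < gaussNorm w f := by
  obtain ⟨i, hi⟩ := dominantSupport_nonempty w hf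
  rw [← nnnorm_coeff_mul_of_mem_dominantSupport hi]
  exact mul_pos (nnnorm_pos.2 (Finsupp.mem_support_iff.1 (Finset.mem_filter.1 hi).1)) (w.pos i)

theorem mem_dominantSupport_iff {f : AddMonoidAlgebra K I} (hf : f ≠ 0) {i : I} :
    i ∈ dominantSupport w f ↔ ‖f.coeff i‖₊ * w i = gaussNorm w f := by
  refine ⟨nnnorm_coeff_mul_of_mem_dominantSupport, fun h => Finset.mem_filter.2 ⟨?_, h⟩⟩
  rw [Finsupp.mem_support_iff]
  intro h0
  rw [h0, nnnorm_zero, zero_mul] at h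
  exact (gaussNorm_pos w hf).ne h

theorem lt_gaussNorm {f : AddMonoidAlgebra K I} (hf : f ≠ 0) {i : I}
    (hi : i ∉ dominantSupport w f) : ‖f.coeff i‖₊ * w i < gaussNorm w f :=
  (le_gaussNorm w f i).lt_of_ne fun h => hi ((mem_dominantSupport_iff w hf).2 h)

theorem gaussNorm_single (i : I) (c : K) :
    gaussNorm w (AddMonoidAlgebra.single i c) = ‖c‖₊ * w i := by
  classical
  refine le_antisymm (gaussNorm_le fun k => ?_) ?_
  · rw [AddMonoidAlgebra.coeff_single, Finsupp.single_apply]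
    split_ifs with h
    · rw [h]
    · simp
  · simpa using le_gaussNorm w (AddMonoidAlgebra.single i c) i

theorem gaussNorm_one : gaussNorm w (1 : AddMonoidAlgebra K I) = 1 := by
  rw [AddMonoidAlgebra.one_def, gaussNorm_single, nnnorm_one, w.map_zero, one_mul]

theorem gaussNorm_neg (f : AddMonoidAlgebra K I) : gaussNorm w (-f) = gaussNorm w f := by
  have hle (g : AddMonoidAlgebra K I) : gaussNorm w (-g) ≤ gaussNorm w g :=
    gaussNorm_le fun i => by simpa using le_gaussNorm w g i
  exact (hle f).antisymm (by simpa using hle (-f))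

section MapDomain

variable {I' : Type*} [AddCommMonoid I'] {φ : I →+ I'}

theorem gaussNorm_mapDomain (hφ : Function.Injective φ) {w' : Weight I'} (hw : ∀ i, w' (φ i) = w i)
    (f : AddMonoidAlgebra K I) :
    gaussNorm w' (AddMonoidAlgebra.mapDomainRingHom K φ f) = gaussNorm w f := by
  have hcoeff (i : I) : (AddMonoidAlgebra.mapDomainRingHom K φ f).coeff (φ i) = f.coeff i :=
    Finsupp.mapDomain_apply hφ _ _
  refine le_antisymm (gaussNorm_le fun i' => ?_) (gaussNorm_le fun i => ?_)
  · by_cases hi' : i' ∈ Set.range φ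
    · obtain ⟨i, rfl⟩ := hi'
      rw [hcoeff, hw]
      exact le_gaussNorm w f i
    · rw [show (AddMonoidAlgebra.mapDomainRingHom K φ f).coeff i' = 0 from
        Finsupp.mapDomain_of_notMem_range _ _ hi', nnnorm_zero, zero_mul]
      exact zero_le
  · rw [← hcoeff, ← hw]
    exact le_gaussNorm w' _ _

theorem dominantSupport_mapDomain (hφ : Function.Injective φ) {w' : Weight I'}
    (hw : ∀ i, w' (φ i) = w i) (f : AddMonoidAlgebra K I) :
    dominantSupport w' (AddMonoidAlgebra.mapDomainRingHom K φ f) =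
      (dominantSupport w f).map ⟨φ, hφ⟩ := by
  ext i'
  have hcoeff (i : I) : (AddMonoidAlgebra.mapDomainRingHom K φ f).coeff (φ i) = f.coeff i :=
    Finsupp.mapDomain_apply hφ _ _
  simp only [dominantSupport, Finset.mem_map, Finset.mem_filter, Finsupp.mem_support_iff,
    gaussNorm_mapDomain w hφ hw, Function.Embedding.coeFn_mk]
  constructor
  · rintro ⟨h0, h⟩
    obtain ⟨i, rfl⟩ : i' ∈ Set.range φ := by
      by_contra hi'
      exact h0 (Finsupp.mapDomain_of_notMem_range _ _ hi')
    rw [hcoeff] at h0 h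
    exact ⟨i, ⟨h0, hw i ▸ h⟩, rfl⟩
  · rintro ⟨i, ⟨h0, h⟩, rfl⟩
    rw [hcoeff, hw]
    exact ⟨h0, h⟩

end MapDomain

variable [IsUltrametricDist K]

theorem gaussNorm_add_le_max (f g : AddMonoidAlgebra K I) :
    gaussNorm w (f + g) ≤ max (gaussNorm w f) (gaussNorm w g) := by
  refine gaussNorm_le fun i => ?_
  calc ‖(f + g).coeff i‖₊ * w i
      ≤ max ‖f.coeff i‖₊ ‖g.coeff i‖₊ * w i :=
        mul_le_mul_left (IsUltrametricDist.nnnorm_add_le_max _ _) _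
    _ = max (‖f.coeff i‖₊ * w i) (‖g.coeff i‖₊ * w i) := max_mul_of_nonneg _ _ zero_le
    _ ≤ _ := max_le_max (le_gaussNorm w f i) (le_gaussNorm w g i)

variable {w} in
theorem gaussNorm_eq_of_sub_lt {f g : AddMonoidAlgebra K I}
    (h : gaussNorm w (f - g) < gaussNorm w f) : gaussNorm w g = gaussNorm w f := by
  refine le_antisymm ?_ ?_
  · have hadd := gaussNorm_add_le_max w f (-(f - g))
    rwa [gaussNorm_neg, max_eq_left h.le, ← sub_eq_add_neg, sub_sub_cancel] at hadd
  · simpa [h.not_ge] using gaussNorm_add_le_max w (f - g) g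

variable {w} in
theorem dominantSupport_subset_of_sub_lt {f g : AddMonoidAlgebra K I}
    (h : gaussNorm w (f - g) < gaussNorm w f) : dominantSupport w g ⊆ dominantSupport w f := by
  intro a ha
  have hf : f ≠ 0 := by rintro rfl; simp at h
  rw [mem_dominantSupport_iff w hf, ← gaussNorm_eq_of_sub_lt h,
    ← nnnorm_coeff_mul_of_mem_dominantSupport ha]
  have hlt : ‖f.coeff a - g.coeff a‖₊ < ‖g.coeff a‖₊ := by
    rw [← mul_lt_mul_iff_left₀ (w.pos a), nnnorm_coeff_mul_of_mem_dominantSupport ha,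
      gaussNorm_eq_of_sub_lt h]
    exact (le_gaussNorm w (f - g) a).trans_lt h
  have hadd := IsUltrametricDist.nnnorm_add_eq_max_of_nnnorm_ne_nnnorm hlt.ne
  rw [sub_add_cancel, max_eq_right hlt.le] at hadd
  rw [hadd]

variable {w} in
theorem dominantSupport_eq_of_sub_lt {f g : AddMonoidAlgebra K I}
    (h : gaussNorm w (f - g) < gaussNorm w f) : dominantSupport w g = dominantSupport w f := by
  refine (dominantSupport_subset_of_sub_lt h).antisymm (dominantSupport_subset_of_sub_lt ?_)
  rwa [← neg_sub, gaussNorm_neg, gaussNorm_eq_of_sub_lt h]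

theorem gaussNorm_mul_le (f g : AddMonoidAlgebra K I) :
    gaussNorm w (f * g) ≤ gaussNorm w f * gaussNorm w g := by
  classical
  refine gaussNorm_le fun k => ?_
  rw [AddMonoidAlgebra.coeff_mul, ← le_div_iff₀ (w.pos k)]
  refine IsUltrametricDist.nnnorm_sum_le_of_forall_le fun x _ =>
    IsUltrametricDist.nnnorm_sum_le_of_forall_le fun y _ => ?_
  beta_reduce
  split_ifs with hk
  · rw [le_div_iff₀ (w.pos k), nnnorm_mul, ← hk, w.map_add, mul_mul_mul_comm]
    exact mul_le_mul' (le_gaussNorm w f x) (le_gaussNorm w g y)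
  · rw [nnnorm_zero]; exact zero_le

variable {w} in
theorem nnnorm_coeff_mul_eq_of_uniqueAdd {f g : AddMonoidAlgebra K I} {x y : I}
    (hx : x ∈ dominantSupport w f) (hy : y ∈ dominantSupport w g)
    (h : UniqueAdd (dominantSupport w f) (dominantSupport w g) x y) :
    ‖(f * g).coeff (x + y)‖₊ * w (x + y) = gaussNorm w f * gaussNorm w g := by
  classical
  have hf := ne_zero_of_mem_dominantSupport hx
  have hg := ne_zero_of_mem_dominantSupport hy
  set S := f.coeff.support ×ˢ g.coeff.support with hS
  have hmem : (x, y) ∈ S :=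
    Finset.mem_product.2 ⟨(Finset.mem_filter.1 hx).1, (Finset.mem_filter.1 hy).1⟩
  have hsum : (f * g).coeff (x + y) =
      ∑ z ∈ S, if z.1 + z.2 = x + y then f.coeff z.1 * g.coeff z.2 else 0 := by
    rw [AddMonoidAlgebra.coeff_mul, hS, Finset.sum_product]
    rfl
  rw [← Finset.add_sum_erase S _ hmem, if_pos rfl] at hsum
  have hterm : ‖f.coeff x * g.coeff y‖₊ = gaussNorm w f * gaussNorm w g / w (x + y) := by
    rw [eq_div_iff (w.ne_zero _), nnnorm_mul, w.map_add, mul_mul_mul_comm,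
      nnnorm_coeff_mul_of_mem_dominantSupport hx, nnnorm_coeff_mul_of_mem_dominantSupport hy]
  have hpos : 0 < gaussNorm w f * gaussNorm w g / w (x + y) :=
    div_pos (mul_pos (gaussNorm_pos w hf) (gaussNorm_pos w hg)) (w.pos _)
  have hrest : ‖∑ z ∈ S.erase (x, y), if z.1 + z.2 = x + y then f.coeff z.1 * g.coeff z.2 else 0‖₊
      < gaussNorm w f * gaussNorm w g / w (x + y) := by
    refine (Finset.nnnorm_sum_le_sup_nnnorm _ _).trans_lt
      ((Finset.sup_lt_iff (bot_eq_zero.trans_lt hpos)).2 fun z hz => ?_)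
    split_ifs with hxy
    · rw [lt_div_iff₀ (w.pos _), nnnorm_mul, ← hxy, w.map_add, mul_mul_mul_comm]
      by_cases hz1 : z.1 ∈ dominantSupport w f
      · have hz2 : z.2 ∉ dominantSupport w g := fun hz2 =>
          Finset.ne_of_mem_erase hz (Prod.ext (h hz1 hz2 hxy).1 (h hz1 hz2 hxy).2)
        exact (mul_le_mul_left (le_gaussNorm w f _) _).trans_lt
          (mul_lt_mul_of_pos_left (lt_gaussNorm w hg hz2) (gaussNorm_pos w hf))
      · exact (mul_le_mul_right (le_gaussNorm w g _) _).trans_lt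
          (mul_lt_mul_of_pos_right (lt_gaussNorm w hf hz1) (gaussNorm_pos w hg))
    · rwa [nnnorm_zero]
  rw [hsum, IsUltrametricDist.nnnorm_add_eq_max_of_nnnorm_ne_nnnorm (hterm ▸ hrest.ne'), hterm,
    max_eq_left hrest.le, div_mul_cancel₀ _ (w.ne_zero _)]

variable {w} in
theorem gaussNorm_mul_le_gaussNorm_mul_add {f P r : AddMonoidAlgebra K I} {x y : I}
    (hx : x ∈ dominantSupport w f) (hy : y ∈ dominantSupport w P)
    (h : UniqueAdd (dominantSupport w f) (dominantSupport w P) x y) (hr : r.coeff (x + y) = 0) :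
    gaussNorm w f * gaussNorm w P ≤ gaussNorm w (f * P + r) := by
  have hcoeff : (f * P + r).coeff (x + y) = (f * P).coeff (x + y) := by
    rw [AddMonoidAlgebra.coeff_add, Finsupp.add_apply, hr, add_zero]
  rw [← nnnorm_coeff_mul_eq_of_uniqueAdd hx hy h, ← hcoeff]
  exact le_gaussNorm w _ _

theorem gaussNorm_mul [UniqueSums I] (f g : AddMonoidAlgebra K I) :
    gaussNorm w (f * g) = gaussNorm w f * gaussNorm w g := by
  rcases eq_or_ne f 0 with rfl | hf
  · simp
  rcases eq_or_ne g 0 with rfl | hg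
  · simp
  obtain ⟨x, hx, y, hy, hxy⟩ := UniqueSums.uniqueAdd_of_nonempty
    (dominantSupport_nonempty w hf) (dominantSupport_nonempty w hg)
  refine (gaussNorm_mul_le w f g).antisymm ?_
  rw [← nnnorm_coeff_mul_eq_of_uniqueAdd hx hy hxy]
  exact le_gaussNorm w _ _

/-- The Gauss norm as a valuation. -/
noncomputable def gaussValuation [UniqueSums I] : Valuation (AddMonoidAlgebra K I) ℝ≥0 where
  toFun := gaussNorm w
  map_zero' := gaussNorm_zero w
  map_one' := gaussNorm_one w
  map_mul' := gaussNorm_mul w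
  map_add_le_max' := gaussNorm_add_le_max w

end GaussNorm

/-! ### Completions -/

theorem isUltrametricDist_completion {S : Type*} [PseudoMetricSpace S] [IsUltrametricDist S] :
    IsUltrametricDist (UniformSpace.Completion S) where
  dist_triangle_max x y z := by
    refine UniformSpace.Completion.induction_on₃ x y z
      (isClosed_le (by fun_prop) (by fun_prop)) fun a b c => ?_
    simp only [UniformSpace.Completion.dist_eq]
    exact dist_triangle_max a b c

theorem exists_isometric_extension {S A B : Type*} [CommRing S] [NormedCommRing A]
    [NormedCommRing B] [CompleteSpace B] {j : S →+* A} (hj : DenseRange j) {f : S →+* B}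
    (hf : ∀ s, ‖f s‖₊ = ‖j s‖₊) : ∃ F : A →+* B, (∀ s, F (j s) = f s) ∧ ∀ a, ‖F a‖₊ = ‖a‖₊ := by
  let _ : PseudoMetricSpace S := PseudoMetricSpace.induced j inferInstance
  have hjS : IsUniformInducing j := ⟨rfl⟩
  have hfS : UniformContinuous f :=
    (Isometry.of_dist_eq fun x y => by
      rw [dist_eq_norm, ← map_sub, ← coe_nnnorm, hf, map_sub, coe_nnnorm, ← dist_eq_norm]
      rfl).uniformContinuous
  have hext (s : S) : IsDenseInducing.extendRingHom hjS hj hfS (j s) = f s :=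
    IsDenseInducing.extend_eq (hjS.isDenseInducing hj) hfS.continuous s
  have hcont : Continuous (IsDenseInducing.extendRingHom hjS hj hfS) :=
    (uniformContinuous_uniformly_extend hjS hj hfS).continuous
  exact ⟨_, hext, fun a => hj.induction_on a (isClosed_eq (by fun_prop) (by fun_prop))
    fun s => by rw [hext, hf]⟩

/-- `j` exhibits `A` as the completion of a polynomial ring for a Gauss norm, once `A` is
complete. -/
structure GaussModel {K I A : Type*} [NormedField K] [AddCommMonoid I] [NormedCommRing A]
    (w : Weight I) (j : AddMonoidAlgebra K I →+* A) : Prop where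
  nnnorm_map : ∀ f, ‖j f‖₊ = gaussNorm w f
  denseRange : DenseRange j

theorem exists_gaussModel (K : Type u) [NormedField K] [IsUltrametricDist K] {I : Type v}
    [AddCommMonoid I] (w : Weight I) :
    ∃ (A : Type max u v) (_ : NormedCommRing A) (_ : CompleteSpace A) (_ : IsUltrametricDist A)
      (j : AddMonoidAlgebra K I →+* A), GaussModel w j := by
  let N : RingSeminorm (AddMonoidAlgebra K I) :=
    { toFun f := gaussNorm w f
      map_zero' := by simp
      add_le' f g := mod_cast (gaussNorm_add_le_max w f g).trans
        (max_le_add_of_nonneg zero_le zero_le)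
      neg' f := by rw [gaussNorm_neg]
      mul_le' f g := mod_cast gaussNorm_mul_le w f g }
  let _ : SeminormedCommRing (AddMonoidAlgebra K I) :=
    { N.toSeminormedRing with mul_comm := mul_comm }
  have : IsUltrametricDist (AddMonoidAlgebra K I) :=
    .isUltrametricDist_of_forall_norm_add_le_max_norm fun f g =>
      mod_cast gaussNorm_add_le_max w f g
  exact ⟨UniformSpace.Completion (AddMonoidAlgebra K I), inferInstance, inferInstance,
    isUltrametricDist_completion, UniformSpace.Completion.coeRingHom,
    fun f => NNReal.eq (UniformSpace.Completion.norm_coe f),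
    UniformSpace.Completion.denseRange_coe⟩

/-- The elements of `C` which are fractions with numerator in `A` and denominator in `S`. -/
def fractions {A C : Type*} [CommRing A] [CommRing C] (θ : A →+* C) (S : Submonoid A) :
    AddSubgroup C where
  carrier := {c | ∃ s ∈ S, ∃ x, θ s * c = θ x}
  zero_mem' := ⟨1, S.one_mem, 0, by simp⟩
  add_mem' := by
    rintro c c' ⟨s, hs, x, hx⟩ ⟨s', hs', x', hx'⟩
    refine ⟨s * s', S.mul_mem hs hs', s' * x + s * x', ?_⟩
    simp only [map_mul, map_add]
    linear_combination θ s' * hx + θ s * hx'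
  neg_mem' := by
    rintro c ⟨s, hs, x, hx⟩
    exact ⟨s, hs, -x, by rw [mul_neg, hx, map_neg]⟩

theorem exists_normedField_completion {S : Type u} [CommRing S] [IsDomain S]
    (v : Valuation S ℝ≥0) (hv : ∀ x, v x = 0 → x = 0) :
    ∃ (L : Type u) (_ : NormedField L) (_ : CompleteSpace L) (_ : IsUltrametricDist L)
      (j : S →+* L), (∀ s, ‖j s‖₊ = v s) ∧ Dense (fractions j (nonZeroDivisors S) : Set L) := by
  have hS : nonZeroDivisors S ≤ v.supp.primeCompl :=
    fun x hx hx' => nonZeroDivisors.ne_zero hx (hv x hx')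
  let V : Valuation (FractionRing S) ℝ≥0 := v.extendToLocalization hS (FractionRing S)
  let absV : AbsoluteValue (FractionRing S) ℝ :=
    { toFun x := V x
      map_mul' x y := by simp
      nonneg' x := NNReal.coe_nonneg _
      eq_zero' x := by simp
      add_le' x y := mod_cast (V.map_add x y).trans (max_le_add_of_nonneg zero_le zero_le) }
  let _ : NormedField (FractionRing S) := absV.toNormedField
  have : IsUltrametricDist (FractionRing S) :=
    .isUltrametricDist_of_forall_norm_add_le_max_norm fun x y => mod_cast V.map_add x y
  let c : FractionRing S →+* UniformSpace.Completion (FractionRing S) :=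
    UniformSpace.Completion.coeRingHom
  refine ⟨UniformSpace.Completion (FractionRing S), inferInstance, inferInstance,
    isUltrametricDist_completion, c.comp (algebraMap S _), fun s => ?_, ?_⟩
  · refine NNReal.eq ((UniformSpace.Completion.norm_coe _).trans ?_)
    exact congr_arg NNReal.toReal (v.extendToLocalization_apply_map_apply hS (FractionRing S) s)
  · refine (UniformSpace.Completion.denseRange_coe (α := FractionRing S)).mono ?_
    rintro _ ⟨x, rfl⟩
    obtain ⟨a, b, hb, rfl⟩ := IsFractionRing.div_surjective (A := S) x
    refine ⟨b, hb, a, ?_⟩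
    have hb0 : algebraMap S (FractionRing S) b ≠ 0 :=
      IsFractionRing.to_map_ne_zero_of_mem_nonZeroDivisors hb
    exact (map_mul c _ _).symm.trans (congr_arg c (mul_div_cancel₀ _ hb0))

/-! ### Weierstrass polynomials in Gauss completions -/

/-- The exponents of a single variable, in a form covering both polynomial variables (`J = ℕ`) and
Laurent variables (`J = ℤ`); `o` is the exponent of the variable itself. -/
structure IsExponentLine {J : Type*} [AddCommMonoid J] [LinearOrder J] (o : J) : Prop where
  pos : 0 < o
  exists_eq_add_nsmul : ∀ a b : J, a ≤ b → ∃ k : ℕ, b = a + k • o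
  nonneg_or_exists_add_eq_zero : (∀ a : J, 0 ≤ a) ∨ ∀ a : J, ∃ b, a + b = 0

/-- `g` is distinguished of degree `d` in the variable of exponent `o`: its terms of maximal norm
have exponents between `0` and `d • o`, and the bounds are attained. For a polynomial variable the
lower bound need not be attained. -/
structure IsDistinguished {K J : Type*} [NormedField K] [AddCommMonoid J] [LinearOrder J]
    (w : Weight J) (o : J) (d : ℕ) (g : AddMonoidAlgebra K J) : Prop where
  nsmul_mem : d • o ∈ dominantSupport w g
  mem_Icc : ∀ a ∈ dominantSupport w g, 0 ≤ a ∧ a ≤ d • o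
  nonneg_or_zero_mem : (∀ a : J, 0 ≤ a) ∨ 0 ∈ dominantSupport w g

section NormalForm

variable {K J : Type*} [NormedField K] [AddCommMonoid J]

/-- Evaluation of a polynomial at the variable of exponent `o`. -/
noncomputable def evalVar (K : Type*) [NormedField K] (o : J) : K[X] →+* AddMonoidAlgebra K J :=
  (AddMonoidAlgebra.mapDomainRingHom K (multiplesHom J o)).comp (toFinsuppIso K).toRingHom

theorem evalVar_monomial (o : J) (k : ℕ) (c : K) :
    evalVar K o (monomial k c) = AddMonoidAlgebra.single (k • o) c := by
  simp [evalVar, toFinsuppIso]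

theorem coeff_evalVar_of_notMem_range {o a : J} (ha : a ∉ Set.range fun k : ℕ => k • o)
    (p : K[X]) : (evalVar K o p).coeff a = 0 :=
  Finsupp.mapDomain_of_notMem_range p.toFinsupp.coeff a ha

variable [LinearOrder J] [IsOrderedCancelAddMonoid J] {o : J} {w : Weight J}

theorem coeff_evalVar (ho : 0 < o) (p : K[X]) (k : ℕ) :
    (evalVar K o p).coeff (k • o) = p.coeff k :=
  Finsupp.mapDomain_apply (nsmul_left_strictMono ho).injective p.toFinsupp.coeff k

theorem IsDistinguished.exists_monic (ho : IsExponentLine o) {d : ℕ} {g : AddMonoidAlgebra K J}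
    (hg : IsDistinguished w o d g) (hd : g.coeff (d • o) = 1) :
    ∃ p : K[X], p.Monic ∧ p.natDegree = d ∧
      gaussNorm w (g - evalVar K o p) < gaussNorm w g := by
  let p : K[X] := ∑ k ∈ Finset.range (d + 1), monomial k (g.coeff (k • o))
  have hcoeff (n : ℕ) : p.coeff n = if n < d + 1 then g.coeff (n • o) else 0 := by
    simp [p, finsetSum_coeff, coeff_monomial]
  have hdegree : p.natDegree ≤ d :=
    natDegree_le_iff_coeff_eq_zero.2 fun n hn => by rw [hcoeff, if_neg (by lia)]
  have hlead : p.coeff d = 1 := by rw [hcoeff, if_pos d.lt_succ_self, hd]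
  refine ⟨p, monic_of_natDegree_le_of_coeff_eq_one d hdegree hlead,
    hdegree.antisymm (le_natDegree_of_ne_zero (hlead ▸ one_ne_zero)), ?_⟩
  have hg0 := ne_zero_of_mem_dominantSupport hg.nsmul_mem
  refine (Finset.sup_lt_iff (bot_eq_zero.trans_lt (gaussNorm_pos w hg0))).2 fun a _ => ?_
  rw [AddMonoidAlgebra.coeff_sub, Finsupp.sub_apply]
  by_cases ha : a ∈ dominantSupport w g
  · obtain ⟨h0a, had⟩ := hg.mem_Icc a ha
    obtain ⟨k, rfl⟩ := ho.exists_eq_add_nsmul 0 a h0a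
    rw [zero_add] at had ⊢
    have hk : k < d + 1 :=
      Nat.lt_succ_of_le ((nsmul_left_strictMono ho.pos).le_iff_le.1 had)
    rw [coeff_evalVar ho.pos, hcoeff, if_pos hk, sub_self, nnnorm_zero, zero_mul]
    exact gaussNorm_pos w hg0
  · have hlt := lt_gaussNorm w hg0 ha
    by_cases hmem : a ∈ Set.range fun k : ℕ => k • o
    · obtain ⟨k, rfl⟩ := hmem
      beta_reduce at hlt ⊢
      rw [coeff_evalVar ho.pos, hcoeff]
      split_ifs
      · simpa using gaussNorm_pos w hg0
      · rwa [sub_zero]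
    · rwa [coeff_evalVar_of_notMem_range hmem, sub_zero]

variable [IsUltrametricDist K]

theorem mem_dominantSupport_single_mul {i i' : J} (hi : i + i' = 0) {c : K} (hc : c ≠ 0)
    {g : AddMonoidAlgebra K J} (hg : g ≠ 0) {a : J} :
    a ∈ dominantSupport w (AddMonoidAlgebra.single i c * g) ↔ i' + a ∈ dominantSupport w g := by
  have hgn := gaussNorm_mul w (AddMonoidAlgebra.single i c) g
  rw [gaussNorm_single] at hgn
  have hw : ‖c‖₊ * w i ≠ 0 := mul_ne_zero (nnnorm_ne_zero_iff.2 hc) (w.ne_zero i)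
  have hne : AddMonoidAlgebra.single i c * g ≠ 0 := by
    rintro h0
    rw [h0, gaussNorm_zero] at hgn
    exact mul_ne_zero hw (gaussNorm_pos w hg).ne' hgn.symm
  have ha : a = i + (i' + a) := by rw [← add_assoc, hi, zero_add]
  rw [mem_dominantSupport_iff w hne, mem_dominantSupport_iff w hg, hgn]
  conv_lhs => rw [ha, AddMonoidAlgebra.coeff_single_mul_add, nnnorm_mul, w.map_add,
    mul_mul_mul_comm]
  exact mul_right_inj' hw

theorem exists_isDistinguished_single_mul (ho : IsExponentLine o) (w : Weight J)
    {g : AddMonoidAlgebra K J} (hg : g ≠ 0) :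
    ∃ i i' c d, i + i' = 0 ∧ c ≠ 0 ∧
      IsDistinguished w o d (AddMonoidAlgebra.single i c * g) ∧
        (AddMonoidAlgebra.single i c * g).coeff (d • o) = 1 := by
  have hne := dominantSupport_nonempty w hg
  obtain ⟨b, hb, hmax⟩ := (dominantSupport w g).exists_max_image id hne
  obtain ⟨i', i, hi, hlow, hmin⟩ : ∃ i' i : J, i + i' = 0 ∧
      (∀ a ∈ dominantSupport w g, i' ≤ a) ∧ ((∀ a : J, 0 ≤ a) ∨ i' ∈ dominantSupport w g) := by
    rcases ho.nonneg_or_exists_add_eq_zero with h | h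
    · exact ⟨0, 0, add_zero 0, fun a _ => h a, .inl h⟩
    · obtain ⟨i', hi', hmin⟩ := (dominantSupport w g).exists_min_image id hne
      obtain ⟨i, hi⟩ := h i'
      exact ⟨i', i, by rwa [add_comm], hmin, .inr hi'⟩
  obtain ⟨d, rfl⟩ := ho.exists_eq_add_nsmul i' b (hlow b hb)
  have hc : g.coeff (i' + d • o) ≠ 0 := Finsupp.mem_support_iff.1 (Finset.mem_filter.1 hb).1
  have hmem {a : J} := mem_dominantSupport_single_mul (w := w) (a := a) hi (inv_ne_zero hc) hg
  refine ⟨i, i', _, d, hi, inv_ne_zero hc, ⟨hmem.2 hb, fun a ha => ?_, ?_⟩, ?_⟩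
  · rw [hmem] at ha
    exact ⟨le_of_add_le_add_left (by rw [add_zero]; exact hlow _ ha),
      le_of_add_le_add_left (hmax _ ha)⟩
  · exact hmin.imp_right fun h => hmem.2 (by rwa [add_zero])
  · set c := g.coeff (i' + d • o)
    have hd : d • o = i + (i' + d • o) := by rw [← add_assoc, hi, zero_add]
    rw [hd, AddMonoidAlgebra.coeff_single_mul_add]
    exact inv_mul_cancel₀ hc

theorem exists_isDistinguished_evalVar (ho : IsExponentLine o) (w : Weight J)
    {g : AddMonoidAlgebra K J} (hg : g ≠ 0) :
    ∃ (u : (AddMonoidAlgebra K J)ˣ) (p : K[X]), p.Monic ∧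
      IsDistinguished w o p.natDegree (evalVar K o p) ∧
        gaussNorm w (u.val * g - evalVar K o p) < gaussNorm w (evalVar K o p) := by
  obtain ⟨i, i', c, d, hi, hc, hdist, hd⟩ := exists_isDistinguished_single_mul ho w hg
  obtain ⟨p, hp, rfl, hlt⟩ := hdist.exists_monic ho hd
  have hu : AddMonoidAlgebra.single i c * AddMonoidAlgebra.single i' c⁻¹ =
      (1 : AddMonoidAlgebra K J) := by
    rw [AddMonoidAlgebra.single_mul_single, hi, mul_inv_cancel₀ hc, AddMonoidAlgebra.one_def]
  have hsupp := dominantSupport_eq_of_sub_lt hlt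
  refine ⟨Units.mkOfMulEqOne _ _ hu, p, hp, ?_, ?_⟩
  · exact ⟨hsupp ▸ hdist.nsmul_mem, hsupp ▸ hdist.mem_Icc, hsupp ▸ hdist.nonneg_or_zero_mem⟩
  · rwa [gaussNorm_eq_of_sub_lt hlt]

end NormalForm

/-- The product weight. -/
def Weight.prod {I J : Type*} [AddCommMonoid I] [AddCommMonoid J] (w : Weight I) (w' : Weight J) :
    Weight (I × J) where
  toFun x := w x.1 * w' x.2
  map_zero := by rw [Prod.fst_zero, Prod.snd_zero, w.map_zero, w'.map_zero, one_mul]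
  map_add a b := by rw [Prod.fst_add, Prod.snd_add, w.map_add, w'.map_add, mul_mul_mul_comm]
  ne_zero a := mul_ne_zero (w.ne_zero _) (w'.ne_zero _)

section Product

variable (K I J : Type*) [NormedField K] [AddCommMonoid I] [AddCommMonoid J]

/-- The inclusion of the polynomials in the first group of variables. -/
noncomputable abbrev inlHom : AddMonoidAlgebra K I →+* AddMonoidAlgebra K (I × J) :=
  AddMonoidAlgebra.mapDomainRingHom K (AddMonoidHom.inl I J)

/-- The inclusion of the polynomials in the second group of variables. -/
noncomputable abbrev inrHom : AddMonoidAlgebra K J →+* AddMonoidAlgebra K (I × J) :=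
  AddMonoidAlgebra.mapDomainRingHom K (AddMonoidHom.inr I J)

variable {K I J}

theorem inl_injective : Function.Injective (AddMonoidHom.inl I J) :=
  Prod.mk_left_injective 0

theorem inr_injective : Function.Injective (AddMonoidHom.inr I J) :=
  Prod.mk_right_injective 0

theorem uniqueAdd_map_inr {S : Finset (I × J)} {T : Finset J} {x : I × J} {b : J}
    (h : ∀ y ∈ S, ∀ b' ∈ T, y.2 + b' = x.2 + b → y.2 = x.2 ∧ b' = b) :
    UniqueAdd S (T.map ⟨AddMonoidHom.inr I J, inr_injective⟩) x (0, b) := by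
  intro y z hy hz hadd
  obtain ⟨b', hb', rfl⟩ := Finset.mem_map.1 hz
  obtain ⟨hfst, hsnd⟩ := Prod.ext_iff.1 hadd
  obtain ⟨hy2, hb⟩ := h y hy b' hb' hsnd
  exact ⟨Prod.ext ((add_zero _).symm.trans (hfst.trans (add_zero _))) hy2, Prod.ext rfl hb⟩

variable (w : Weight I) (w' : Weight J)

theorem Weight.prod_inl (i : I) : w.prod w' (AddMonoidHom.inl I J i) = w i :=
  (congr_arg (w i * ·) w'.map_zero).trans (mul_one _)

theorem Weight.prod_inr (a : J) : w.prod w' (AddMonoidHom.inr I J a) = w' a :=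
  (congr_arg (· * w' a) w.map_zero).trans (one_mul _)

theorem gaussNorm_inlHom (f : AddMonoidAlgebra K I) :
    gaussNorm (w.prod w') (inlHom K I J f) = gaussNorm w f :=
  gaussNorm_mapDomain w inl_injective (w.prod_inl w') f

theorem gaussNorm_inrHom (g : AddMonoidAlgebra K J) :
    gaussNorm (w.prod w') (inrHom K I J g) = gaussNorm w' g :=
  gaussNorm_mapDomain w' inr_injective (w.prod_inr w') g

/-- Evaluation of a polynomial over `K[I]` at the variable of exponent `o` in `K[I × J]`. -/
noncomputable def evalVarRight (K I : Type*) {J : Type*} [NormedField K] [AddCommMonoid I]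
    [AddCommMonoid J] (o : J) : (AddMonoidAlgebra K I)[X] →+* AddMonoidAlgebra K (I × J) :=
  eval₂RingHom (inlHom K I J) (AddMonoidAlgebra.single (0, o) 1)

theorem evalVarRight_monomial_single (o : J) (k : ℕ) (i : I) (c : K) :
    evalVarRight K I o (monomial k (AddMonoidAlgebra.single i c)) =
      AddMonoidAlgebra.single (i, k • o) c := by
  simp [evalVarRight, AddMonoidAlgebra.single_pow, AddMonoidAlgebra.single_mul_single]

theorem evalVarRight_map (o : J) (p : K[X]) :
    evalVarRight K I o (p.map AddMonoidAlgebra.singleZeroRingHom) =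
      inrHom K I J (evalVar K o p) := by
  induction p using Polynomial.induction_on' with
  | add p q hp hq => simp only [Polynomial.map_add, map_add, hp, hq]
  | monomial k c =>
    rw [evalVar_monomial, map_monomial]
    exact (evalVarRight_monomial_single o k 0 c).trans
      (AddMonoidAlgebra.mapDomain_single (f := AddMonoidHom.inr I J)).symm

variable {o : J}

theorem coeff_evalVarRight_of_notMem_range {a : J} (ha : a ∉ Set.range fun k : ℕ => k • o)
    (r : (AddMonoidAlgebra K I)[X]) (i : I) : (evalVarRight K I o r).coeff (i, a) = 0 := by
  classical
  induction r using Polynomial.induction_on' with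
  | add p q hp hq => rw [map_add, AddMonoidAlgebra.coeff_add, Finsupp.add_apply, hp, hq, add_zero]
  | monomial n f =>
    induction f using AddMonoidAlgebra.induction_linear with
    | zero => simp
    | add f g hf hg =>
      rw [map_add, map_add, AddMonoidAlgebra.coeff_add, Finsupp.add_apply, hf, hg, add_zero]
    | single i' c =>
      rw [evalVarRight_monomial_single, AddMonoidAlgebra.coeff_single, Finsupp.single_apply,
        if_neg fun h => ha ⟨n, congr_arg Prod.snd h⟩]

theorem exists_single_eq_mul_add_evalVarRight {a : J} {k : ℕ} (ha : a + k • o = 0) {p : K[X]}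
    (hp : p.coeff 0 ≠ 0) (i : I) (c : K) :
    ∃ q r, AddMonoidAlgebra.single (i, a) c =
      q * inrHom K I J (evalVar K o p) + evalVarRight K I o r := by
  have hX : IsCoprime (X ^ k) p :=
    (irreducible_X.coprime_iff_not_dvd.2 fun h => hp (X_dvd_iff.1 h)).pow_left
  obtain ⟨A, B, hAB⟩ := hX
  let φ : K[X] →+* AddMonoidAlgebra K (I × J) := (inrHom K I J).comp (evalVar K o)
  have hXk : φ (X ^ k) = AddMonoidAlgebra.single (0, k • o) 1 := by
    rw [← monomial_one_right_eq_X_pow]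
    exact (congr_arg _ (evalVar_monomial o k 1)).trans
      (AddMonoidAlgebra.mapDomain_single (f := AddMonoidHom.inr I J))
  have hone : φ A * AddMonoidAlgebra.single (0, k • o) 1 + φ B * φ p = 1 := by
    rw [← map_one φ, ← hAB, map_add, map_mul, map_mul, hXk]
  have hmul : AddMonoidAlgebra.single (i, a) c * AddMonoidAlgebra.single ((0 : I), k • o) 1 =
      AddMonoidAlgebra.single (i, (0 : J)) c := by
    rw [AddMonoidAlgebra.single_mul_single, Prod.mk_add_mk, add_zero, ha, mul_one]
  refine ⟨AddMonoidAlgebra.single (i, a) c * φ B, A.map AddMonoidAlgebra.singleZeroRingHom *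
    monomial 0 (AddMonoidAlgebra.single i c), ?_⟩
  rw [map_mul, evalVarRight_map, evalVarRight_monomial_single, zero_smul, ← hmul]
  change _ = _ * φ p + φ A * _
  linear_combination (-AddMonoidAlgebra.single (i, a) c) * hone

theorem exists_eq_mul_add_evalVarRight [LinearOrder J] (ho : IsExponentLine o) {p : K[X]}
    (hp : (∀ a : J, 0 ≤ a) ∨ p.coeff 0 ≠ 0) (f : AddMonoidAlgebra K (I × J)) :
    ∃ q r, f = q * inrHom K I J (evalVar K o p) + evalVarRight K I o r := by
  induction f using AddMonoidAlgebra.induction_linear with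
  | zero => exact ⟨0, 0, by simp⟩
  | add f g hf hg =>
    obtain ⟨q, r, rfl⟩ := hf
    obtain ⟨q', r', rfl⟩ := hg
    exact ⟨q + q', r + r', by rw [map_add]; ring⟩
  | single x c =>
    obtain ⟨i, a⟩ := x
    rcases le_or_gt 0 a with ha | ha
    · obtain ⟨k, rfl⟩ := ho.exists_eq_add_nsmul 0 a ha
      exact ⟨0, monomial k (AddMonoidAlgebra.single i c), by
        rw [evalVarRight_monomial_single, zero_mul, zero_add, zero_add]⟩
    · obtain ⟨k, hk⟩ := ho.exists_eq_add_nsmul a 0 ha.le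
      exact exists_single_eq_mul_add_evalVarRight hk.symm
        (hp.resolve_left fun h => (h a).not_gt ha) i c

variable [LinearOrder J] [IsOrderedCancelAddMonoid J]

theorem coeff_evalVarRight (ho : 0 < o) (r : (AddMonoidAlgebra K I)[X]) (i : I) (k : ℕ) :
    (evalVarRight K I o r).coeff (i, k • o) = (r.coeff k).coeff i := by
  classical
  induction r using Polynomial.induction_on' with
  | add p q hp hq =>
    simp only [map_add, AddMonoidAlgebra.coeff_add, Finsupp.add_apply, coeff_add, hp, hq]
  | monomial n f =>
    induction f using AddMonoidAlgebra.induction_linear with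
    | zero => simp
    | add f g hf hg =>
      simp only [map_add, AddMonoidAlgebra.coeff_add, Finsupp.add_apply, coeff_add, hf, hg]
    | single i' c =>
      rw [evalVarRight_monomial_single, coeff_monomial]
      by_cases h : n = k <;>
        simp [h, Finsupp.single_apply, (nsmul_left_strictMono ho).injective.eq_iff]

theorem coeff_evalVarRight_eq_zero (ho : 0 < o) {d : ℕ} {r : (AddMonoidAlgebra K I)[X]}
    (hr : r.degree < d) {a : J} (ha : a < 0 ∨ d • o ≤ a) (i : I) :
    (evalVarRight K I o r).coeff (i, a) = 0 := by
  by_cases hmem : a ∈ Set.range fun k : ℕ => k • o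
  · obtain ⟨k, rfl⟩ := hmem
    have hdk : d ≤ k := (nsmul_left_strictMono ho).le_iff_le.1
      (ha.resolve_left (nsmul_nonneg ho.le k).not_gt)
    rw [coeff_evalVarRight ho, coeff_eq_zero_of_degree_lt (hr.trans_le (mod_cast hdk)),
      AddMonoidAlgebra.coeff_zero, Finsupp.zero_apply]
  · exact coeff_evalVarRight_of_notMem_range hmem r i

theorem gaussNorm_coeff_mul_le_gaussNorm_evalVarRight (ho : 0 < o)
    (r : (AddMonoidAlgebra K I)[X]) (k : ℕ) :
    gaussNorm w (r.coeff k) * w' o ^ k ≤ gaussNorm (w.prod w') (evalVarRight K I o r) := by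
  rw [← le_div_iff₀ (pow_pos (w'.pos o) k)]
  refine gaussNorm_le fun i => ?_
  rw [le_div_iff₀ (pow_pos (w'.pos o) k), ← coeff_evalVarRight ho, ← w'.map_nsmul, mul_assoc]
  exact le_gaussNorm (w.prod w') _ (i, k • o)

theorem IsDistinguished.gaussNorm_mul_le [IsUltrametricDist K] {w : Weight I} {w' : Weight J}
    (ho : 0 < o) {d : ℕ} {g : AddMonoidAlgebra K J} (hg : IsDistinguished w' o d g)
    (f : AddMonoidAlgebra K (I × J)) {r : (AddMonoidAlgebra K I)[X]} (hr : r.degree < d) :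
    gaussNorm (w.prod w') f * gaussNorm w' g ≤
      gaussNorm (w.prod w') (f * inrHom K I J g + evalVarRight K I o r) := by
  rcases eq_or_ne f 0 with rfl | hf
  · simp
  rw [← gaussNorm_inrHom w w' g]
  have hdom := dominantSupport_mapDomain w' inr_injective (w.prod_inr w') g
  have hmem {b : J} (hb : b ∈ dominantSupport w' g) :
      ((0 : I), b) ∈ dominantSupport (w.prod w') (inrHom K I J g) :=
    hdom ▸ Finset.mem_map_of_mem _ hb
  have hne := dominantSupport_nonempty (w.prod w') hf
  obtain ⟨⟨i, a⟩, hia, hmax⟩ := Finset.exists_max_image _ Prod.snd hne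
  obtain ⟨⟨i', a'⟩, hia', hmin⟩ := Finset.exists_min_image _ Prod.snd hne
  rcases le_or_gt 0 a with ha | ha
  · refine gaussNorm_mul_le_gaussNorm_mul_add hia (hmem hg.nsmul_mem) ?_
      (coeff_evalVarRight_eq_zero ho hr (.inr (le_add_of_nonneg_left ha)) _)
    rw [hdom]
    exact uniqueAdd_map_inr fun y hy b hb hyb =>
      (add_eq_add_iff_eq_and_eq (hmax y hy) (hg.mem_Icc b hb).2).1 hyb
  · have h0 := hg.nonneg_or_zero_mem.resolve_left fun h => (h a).not_gt ha
    have ha' : a' + 0 < 0 := by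
      rw [add_zero]
      exact (hmin _ hia).trans_lt ha
    refine gaussNorm_mul_le_gaussNorm_mul_add hia' (hmem h0) ?_
      (coeff_evalVarRight_eq_zero ho hr (.inl ha') _)
    rw [hdom]
    exact uniqueAdd_map_inr fun y hy b hb hyb =>
      ((add_eq_add_iff_eq_and_eq (hmin y hy) (hg.mem_Icc b hb).1).1 hyb.symm).imp .symm .symm

end Product

section ProductModel

variable {K I J R A : Type*} [NormedField K] [AddCommMonoid I] [AddCommMonoid J]
  [NormedCommRing R] [NormedCommRing A] {w : Weight I} {w' : Weight J}
  {jR : AddMonoidAlgebra K I →+* R} {j : AddMonoidAlgebra K (I × J) →+* A} {ι : R →+* A} {o : J}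

/-- Evaluation of a polynomial over the completion `R` of `K[I]` at the variable of exponent `o`
in the completion `A` of `K[I × J]`. -/
noncomputable def evalVarModel (ι : R →+* A) (j : AddMonoidAlgebra K (I × J) →+* A) (o : J) :
    R[X] →+* A :=
  eval₂RingHom ι (j (AddMonoidAlgebra.single (0, o) 1))

theorem evalVarModel_map (hιj : ∀ f, ι (jR f) = j (inlHom K I J f))
    (F : (AddMonoidAlgebra K I)[X]) :
    evalVarModel ι j o (F.map jR) = j (evalVarRight K I o F) := by
  have hcomp : ι.comp jR = j.comp (inlHom K I J) := RingHom.ext hιj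
  simp only [evalVarModel, evalVarRight, coe_eval₂RingHom, eval₂_map, hom_eval₂, hcomp]

theorem divisionMap_evalVarModel_map (hιj : ∀ f, ι (jR f) = j (inlHom K I J f)) (d : ℕ)
    (P f : AddMonoidAlgebra K (I × J)) (r : Fin d → AddMonoidAlgebra K I) :
    divisionMap (evalVarModel ι j o) d (j P) (j f, fun k => jR (r k)) =
      j (f * P + evalVarRight K I o ((degreeLTEquiv _ d).symm r : (AddMonoidAlgebra K I)[X])) := by
  have hmap : ((degreeLTEquiv R d).symm fun k => jR (r k) : R[X]) =
      ((degreeLTEquiv _ d).symm r : (AddMonoidAlgebra K I)[X]).map jR := by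
    change (∑ k : Fin d, monomial k (jR (r k))) = map jR (∑ k : Fin d, monomial k (r k))
    simp only [Polynomial.map_sum, map_monomial]
  rw [divisionMap_apply, hmap, evalVarModel_map hιj, map_add, map_mul]

theorem continuous_evalVarModel_C (hι : ∀ r, ‖ι r‖₊ = ‖r‖₊) :
    Continuous fun r => evalVarModel ι j o (C r) := by
  have hC (r : R) : evalVarModel ι j o (C r) = ι r := eval₂_C ι _
  simp only [hC]
  exact (AddMonoidHomClass.isometry_of_norm ι fun r => congr_arg NNReal.toReal (hι r)).continuous

variable [LinearOrder J]

theorem denseRange_divisionMap [Nontrivial R] (hj : GaussModel (w.prod w') j)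
    (hιj : ∀ f, ι (jR f) = j (inlHom K I J f)) (ho : IsExponentLine o) {p : K[X]} (hp : p.Monic)
    (hp0 : (∀ a : J, 0 ≤ a) ∨ p.coeff 0 ≠ 0) :
    DenseRange (divisionMap (evalVarModel ι j o) p.natDegree
      (j (inrHom K I J (evalVar K o p)))) := by
  refine hj.denseRange.mono ?_
  rintro _ ⟨f, rfl⟩
  obtain ⟨q, r, rfl⟩ := exists_eq_mul_add_evalVarRight ho hp0 f
  set p' : (AddMonoidAlgebra K I)[X] := p.map AddMonoidAlgebra.singleZeroRingHom with hp'
  have hmonic : p'.Monic := hp.map _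
  have hdeg : ((r %ₘ p').map jR).degree < p.natDegree := by
    refine degree_map_le.trans_lt ((degree_modByMonic_lt r hmonic).trans_le ?_)
    rw [degree_eq_natDegree hmonic.ne_zero, hp.natDegree_map]
  obtain ⟨s, -, hs⟩ := exists_divisionMap_eq (evalVarModel ι j o) _
    (j (inrHom K I J (evalVar K o p))) (j (q + evalVarRight K I o (r /ₘ p'))) hdeg
  refine ⟨_, hs.trans ?_⟩
  have hr := congr_arg (evalVarRight K I o) (modByMonic_add_div r p')
  rw [map_add, map_mul, hp', evalVarRight_map, ← hp'] at hr
  rw [evalVarModel_map hιj, ← map_mul, ← map_add, ← hr]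
  ring_nf

variable [IsOrderedCancelAddMonoid J]

theorem nnnorm_mul_le_nnnorm_divisionMap [IsUltrametricDist K] (hj : GaussModel (w.prod w') j)
    (hjR : GaussModel w jR) (hι : ∀ r, ‖ι r‖₊ = ‖r‖₊) (hιj : ∀ f, ι (jR f) = j (inlHom K I J f))
    (ho : 0 < o) {d : ℕ} {g : AddMonoidAlgebra K J} (hg : IsDistinguished w' o d g)
    (x : A × (Fin d → R)) : ‖x.1‖₊ * ‖j (inrHom K I J g)‖₊ ≤
      ‖divisionMap (evalVarModel ι j o) d (j (inrHom K I J g)) x‖₊ := by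
  have hcont := continuous_divisionMap (d := d) (h := j (inrHom K I J g))
    (continuous_evalVarModel_C (j := j) (o := o) hι)
  refine (hj.denseRange.prodMap (DenseRange.piMap fun _ => hjR.denseRange)).induction_on x
    (isClosed_le (by fun_prop) (by fun_prop)) fun ⟨f, r⟩ => ?_
  change ‖j f‖₊ * _ ≤ ‖divisionMap _ d _ (j f, fun k => jR (r k))‖₊
  rw [divisionMap_evalVarModel_map hιj, hj.nnnorm_map, hj.nnnorm_map, hj.nnnorm_map,
    gaussNorm_inrHom]
  exact hg.gaussNorm_mul_le ho f (degree_degreeLTEquiv_symm_lt r)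

theorem nnnorm_mul_le_nnnorm_divisionMap_zero (hj : GaussModel (w.prod w') j)
    (hjR : GaussModel w jR) (hι : ∀ r, ‖ι r‖₊ = ‖r‖₊) (hιj : ∀ f, ι (jR f) = j (inlHom K I J f))
    (ho : 0 < o) (d : ℕ) (P : AddMonoidAlgebra K (I × J)) (r : Fin d → R) (k : Fin d) :
    ‖r k‖₊ * w' o ^ (k : ℕ) ≤ ‖divisionMap (evalVarModel ι j o) d (j P) (0, r)‖₊ := by
  have hcont := (continuous_divisionMap (d := d) (h := j P)
    (continuous_evalVarModel_C (j := j) (o := o) hι)).comp (Continuous.prodMk_right (0 : A))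
  refine (DenseRange.piMap fun _ => hjR.denseRange).induction_on r
    (isClosed_le (by fun_prop) hcont.nnnorm) fun r => ?_
  have hdiv := divisionMap_evalVarModel_map (o := o) hιj d P 0 r
  rw [map_zero, zero_mul, zero_add] at hdiv
  change ‖jR (r k)‖₊ * _ ≤ ‖divisionMap _ d _ (0, fun k => jR (r k))‖₊
  rw [hdiv, hjR.nnnorm_map, hj.nnnorm_map]
  refine .trans_eq' (gaussNorm_coeff_mul_le_gaussNorm_evalVarRight w w' ho _ k) ?_
  have hcoeff : ((degreeLTEquiv _ d).symm r : (AddMonoidAlgebra K I)[X]).coeff k = r k :=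
    congr_fun ((degreeLTEquiv _ d).apply_symm_apply r) k
  rw [hcoeff]

theorem GaussModel.exists_weierstrassDivision [IsUltrametricDist K] [CompleteSpace R]
    [CompleteSpace A] [IsUltrametricDist A]
    (hj : GaussModel (w.prod w') j) (hjR : GaussModel w jR) (hι : ∀ r, ‖ι r‖₊ = ‖r‖₊)
    (hιj : ∀ f, ι (jR f) = j (inlHom K I J f)) (ho : IsExponentLine o) {p : K[X]} (hp : p.Monic)
    (hdist : IsDistinguished w' o p.natDegree (evalVar K o p)) {h : A}
    (hh : ‖h - j (inrHom K I J (evalVar K o p))‖₊ < gaussNorm w' (evalVar K o p)) :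
    ∃ ω, ω.Monic ∧ WeierstrassDivision (evalVarModel ι j o) ω ∧
      ∃ u : Aˣ, evalVarModel ι j o ω = u * h := by
  set P := j (inrHom K I J (evalVar K o p)) with hP
  have hPnorm : ‖P‖₊ = gaussNorm w' (evalVar K o p) := by
    rw [hP, hj.nnnorm_map, gaussNorm_inrHom]
  have hP0 : P ≠ 0 := nnnorm_pos.1 (hPnorm ▸ pos_of_gt hh)
  have : Nontrivial A := ⟨P, 0, hP0⟩
  have : Nontrivial R := ι.domain_nontrivial
  let pR : R[X] := (p.map AddMonoidAlgebra.singleZeroRingHom).map jR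
  have hpR : pR.Monic := (hp.map _).map _
  have hdeg : pR.natDegree = p.natDegree :=
    ((hp.map _).natDegree_map jR).trans (hp.natDegree_map _)
  have hσ : evalVarModel ι j o pR = P := by rw [evalVarModel_map hιj, evalVarRight_map]
  have hq := nnnorm_mul_le_nnnorm_divisionMap hj hjR hι hιj ho.pos hdist
  have hr (r : Fin p.natDegree → R) : ‖r‖₊ ≤ (∑ k : Fin p.natDegree, (w' o ^ (k : ℕ))⁻¹) *
      ‖divisionMap (evalVarModel ι j o) p.natDegree P (0, r)‖₊ := by
    refine pi_nnnorm_le_iff.2 fun k => ?_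
    have hk := nnnorm_mul_le_nnnorm_divisionMap_zero hj hjR hι hιj ho.pos p.natDegree
      (inrHom K I J (evalVar K o p)) r k
    rw [← le_div_iff₀ (pow_pos (w'.pos o) k), div_eq_inv_mul] at hk
    exact hk.trans (mul_le_mul_left (Finset.single_le_sum (f := fun k : Fin p.natDegree =>
      (w' o ^ (k : ℕ))⁻¹) (fun _ _ => zero_le) (Finset.mem_univ k)) _)
  have hp0 : (∀ a : J, 0 ≤ a) ∨ p.coeff 0 ≠ 0 := hdist.nonneg_or_zero_mem.imp_right fun h0 => by
    have := Finsupp.mem_support_iff.1 (Finset.mem_filter.1 h0).1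
    rwa [← zero_smul ℕ o, coeff_evalVar ho.pos] at this
  refine QuillenSuslin.exists_weierstrassDivision hpR ?_ ?_ (by rwa [hσ, hPnorm])
  · rwa [hσ, hdeg]
  · rw [hσ, hdeg]
    exact bijective_divisionMap (continuous_evalVarModel_C hι) hP0 hq hr
      (denseRange_divisionMap hj hιj ho hp hp0)

theorem GaussModel.exists_weierstrassDivision_of_nnnorm_sub_lt [IsUltrametricDist K]
    [CompleteSpace R] [CompleteSpace A] [IsUltrametricDist A]
    (hj : GaussModel (w.prod w') j) (hjR : GaussModel w jR) (hι : ∀ r, ‖ι r‖₊ = ‖r‖₊)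
    (hιj : ∀ f, ι (jR f) = j (inlHom K I J f)) (ho : IsExponentLine o)
    {g : AddMonoidAlgebra K J} {h : A} (hh : ‖h - j (inrHom K I J g)‖₊ < gaussNorm w' g) :
    ∃ ω, ω.Monic ∧ WeierstrassDivision (evalVarModel ι j o) ω ∧
      ∃ u : Aˣ, evalVarModel ι j o ω = u * h := by
  have hg : g ≠ 0 := by rintro rfl; simp at hh
  obtain ⟨u, p, hp, hdist, hlt⟩ := exists_isDistinguished_evalVar ho w' hg
  let φ : AddMonoidAlgebra K J →+* A := j.comp (inrHom K I J)
  have hφ (f : AddMonoidAlgebra K J) : ‖φ f‖₊ = gaussNorm w' f :=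
    (hj.nnnorm_map _).trans (gaussNorm_inrHom w w' f)
  have hgn : gaussNorm w' u.val * gaussNorm w' g = gaussNorm w' (evalVar K o p) := by
    rw [← gaussNorm_mul]
    refine (gaussNorm_eq_of_sub_lt ?_).symm
    rw [← neg_sub, gaussNorm_neg] at hlt
    rwa [← neg_sub, gaussNorm_neg, gaussNorm_eq_of_sub_lt hlt]
  have hclose : ‖φ u * h - φ (evalVar K o p)‖₊ < gaussNorm w' (evalVar K o p) := by
    have hsplit : φ u * h - φ (evalVar K o p) = φ u * (h - φ g) + φ (u * g - evalVar K o p) := by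
      rw [map_sub, map_mul]; ring
    rw [hsplit]
    refine (IsUltrametricDist.nnnorm_add_le_max _ _).trans_lt (max_lt ?_ (by rwa [hφ]))
    refine (nnnorm_mul_le _ _).trans_lt ?_
    rw [hφ, ← hgn]
    exact mul_lt_mul_of_pos_left hh (gaussNorm_pos w' u.ne_zero)
  obtain ⟨ω, hω, hdiv, v, hv⟩ := hj.exists_weierstrassDivision hjR hι hιj ho hp hdist hclose
  exact ⟨ω, hω, hdiv, v * Units.map φ u, by rw [hv, Units.val_mul, mul_assoc]; rfl⟩

end ProductModel

/-! ### Approximation of splittings -/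

section Approximation

variable {A C : Type*} [CommRing A] [CommRing C] {m n : Type*} [Fintype m] [Fintype n]
  [DecidableEq n]

theorem factorization_mul_adjugate_mul (a x : Matrix m n C) (b y : Matrix n m C) :
    (a * b) * x * (y * (a * b) * x).adjugate * (y * (a * b)) = (y * (a * b) * x).det • (a * b) := by
  have hfactor : y * (a * b) * x = (y * a) * (b * x) := by simp only [Matrix.mul_assoc]
  calc _ = a * ((b * x) * (b * x).adjugate) * ((y * a).adjugate * (y * a)) * b := by
        rw [hfactor, adjugate_mul_distrib]
        simp only [Matrix.mul_assoc]
    _ = (y * (a * b) * x).det • (a * b) := by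
        rw [mul_adjugate, adjugate_mul, hfactor, det_mul]
        simp only [Matrix.mul_smul, Matrix.smul_mul, Matrix.mul_one, smul_smul, mul_comm]

theorem splitsAway_det {θ : A →+* C} (hθ : Function.Injective θ) {e : Matrix m m A}
    (he : IsIdempotentElem e) {r : ℕ} {a : Matrix m (Fin r) C} {b : Matrix (Fin r) m C}
    (hab : a * b = e.map θ) (x : Matrix m (Fin r) A) (y : Matrix (Fin r) m A) :
    SplitsAway (y * e * x).det e := by
  refine ⟨r, e * x, (y * e * x).adjugate * (y * e), Matrix.map_injective hθ ?_, ?_⟩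
  · have hmap := factorization_mul_adjugate_mul a (x.map θ) b (y.map θ)
    have hadj := θ.map_adjugate (y * e * x)
    have hdet := θ.map_det (y * e * x)
    simp only [RingHom.mapMatrix_apply, Matrix.map_mul] at hadj hdet
    rw [hab, ← hadj, ← hdet] at hmap
    simp only [Matrix.map_mul, Matrix.map_smul' θ _ _ (map_mul θ)]
    rw [← hmap]
    simp only [Matrix.mul_assoc]
  · calc _ = (y * e * x).adjugate * (y * (e * e) * x) := by simp only [Matrix.mul_assoc]
      _ = (y * e * x).det • 1 := by rw [he.eq, adjugate_mul]

end Approximation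

theorem exists_smul_eq_map {A C : Type*} [CommRing A] [CommRing C] {m n : Type*} [Finite m]
    [Finite n] {θ : A →+* C} {S : Submonoid A} {M : Matrix m n C}
    (hM : M ∈ (fractions θ S : Set C).matrix) : ∃ s ∈ S, ∃ x : Matrix m n A, θ s • M = x.map θ := by
  classical
  have := Fintype.ofFinite m
  have := Fintype.ofFinite n
  choose s hs x hx using hM
  refine ⟨∏ p : m × n, s p.1 p.2, S.prod_mem fun p _ => hs p.1 p.2,
    .of fun i k => (∏ p ∈ Finset.univ.erase (i, k), s p.1 p.2) * x i k, ?_⟩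
  ext i k
  have hsplit := Finset.prod_erase_mul Finset.univ (fun p : m × n => s p.1 p.2)
    (Finset.mem_univ (i, k))
  simp only [Matrix.smul_apply, smul_eq_mul, map_apply, of_apply, ← hsplit, map_mul, mul_assoc, hx]

theorem dense_matrix {C : Type*} [TopologicalSpace C] {s : Set C} (hs : Dense s) {m n : Type*} :
    Dense (s.matrix : Set (Matrix m n C)) := by
  rw [Set.matrix_eq_pi]
  exact dense_pi _ fun _ _ => dense_pi _ fun _ _ => hs

theorem exists_splitsAway_of_isFreeIdem_map {A C : Type*} [NormedCommRing A] [NormedCommRing C]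
    {θ : A →+* C} (hθ : ∀ x, ‖θ x‖₊ = ‖x‖₊) {S : Submonoid A} (hS0 : ∀ s ∈ S, s ≠ 0)
    (hS : ∀ s ∈ S, ∀ c, ‖θ s * c‖₊ = ‖s‖₊ * ‖c‖₊) (hdense : Dense (fractions θ S : Set C))
    {m : Type*} [Fintype m] {e : Matrix m m A} (he : IsIdempotentElem e)
    (hfree : IsFreeIdem (e.map θ)) : ∃ h, ∃ s ∈ S, ‖h - s‖₊ < ‖s‖₊ ∧ SplitsAway h e := by
  obtain ⟨r, a, b, hab, hba⟩ := hfree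
  have hinj : Function.Injective θ :=
    (AddMonoidHomClass.isometry_of_norm θ fun x => congr_arg NNReal.toReal (hθ x)).injective
  have hdet_ab : (b * e.map θ * a).det = 1 := by
    rw [← hab, ← Matrix.mul_assoc, hba, Matrix.one_mul, hba, det_one]
  have hcont : Continuous fun q : Matrix (Fin r) m C × Matrix m (Fin r) C =>
      ‖(q.1 * e.map θ * q.2).det - 1‖₊ := by fun_prop
  obtain ⟨⟨y', x'⟩, ⟨hy', hx'⟩, hlt⟩ :=
    ((dense_matrix hdense).prod (dense_matrix hdense)).exists_mem_open
      (hcont.isOpen_preimage _ isOpen_Iio) ⟨(b, a), show _ < (1 : ℝ≥0) by simp [hdet_ab]⟩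
  obtain ⟨s, hs, y, hy⟩ := exists_smul_eq_map hy'
  obtain ⟨t, ht, x, hx⟩ := exists_smul_eq_map hx'
  have hst : (s * t) ^ r ∈ S := S.pow_mem (S.mul_mem hs ht) r
  have hdet : θ (y * e * x).det = θ ((s * t) ^ r) * (y' * e.map θ * x').det := by
    rw [θ.map_det, RingHom.mapMatrix_apply, Matrix.map_mul, Matrix.map_mul, ← hx, ← hy]
    simp only [Matrix.smul_mul, Matrix.mul_smul, smul_smul, det_smul, Fintype.card_fin, map_pow,
      map_mul, mul_comm]
  refine ⟨_, _, hst, ?_, splitsAway_det hinj he hab x y⟩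
  calc ‖(y * e * x).det - (s * t) ^ r‖₊
      = ‖θ ((s * t) ^ r) * ((y' * e.map θ * x').det - 1)‖₊ := by
        rw [← hθ, map_sub, hdet, mul_sub, mul_one]
    _ < ‖(s * t) ^ r‖₊ := by
        rw [hS _ hst]
        exact mul_lt_of_lt_one_right (nnnorm_pos.2 (hS0 _ hst)) hlt

/-! ### Adjoining a variable -/

section CurryHom

variable {K L I J : Type*} [NormedField K] [NormedField L] [AddCommMonoid I] [AddCommMonoid J]

theorem coeff_coeff_curryRingEquiv (f : AddMonoidAlgebra K (I × J)) (i : I) (a : J) :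
    ((AddMonoidAlgebra.curryRingEquiv f).coeff i).coeff a = f.coeff (i, a) := by
  classical
  induction f using AddMonoidAlgebra.induction_linear with
  | zero => simp
  | add f g hf hg =>
    rw [map_add, AddMonoidAlgebra.coeff_add, Finsupp.add_apply, AddMonoidAlgebra.coeff_add,
      Finsupp.add_apply, hf, hg, AddMonoidAlgebra.coeff_add, Finsupp.add_apply]
  | single x c =>
    obtain ⟨i', a'⟩ := x
    simp only [AddMonoidAlgebra.curryRingEquiv_single, AddMonoidAlgebra.coeff_single,
      Finsupp.single_apply, Prod.mk.injEq]
    split_ifs <;> simp_all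

/-- The homomorphism `K[I × J] → L[I]` obtained by regarding a polynomial as having coefficients in
`K[J]` and applying `τ` to these. -/
noncomputable def curryHom (I : Type*) [AddCommMonoid I] (τ : AddMonoidAlgebra K J →+* L) :
    AddMonoidAlgebra K (I × J) →+* AddMonoidAlgebra L I :=
  (AddMonoidAlgebra.mapRingHom I τ).comp
    (AddMonoidAlgebra.curryRingEquiv : _ ≃+* AddMonoidAlgebra (AddMonoidAlgebra K J) I)

theorem curryHom_single (τ : AddMonoidAlgebra K J →+* L) (i : I) (a : J) (c : K) :
    curryHom I τ (.single (i, a) c) = .single i (τ (.single a c)) := by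
  rw [curryHom, RingHom.comp_apply, RingEquiv.coe_toRingHom, AddMonoidAlgebra.curryRingEquiv_single,
    AddMonoidAlgebra.mapRingHom_single]

theorem curryHom_single_mul_inrHom (τ : AddMonoidAlgebra K J →+* L) (i : I)
    (g : AddMonoidAlgebra K J) :
    curryHom I τ (.single (i, 0) 1 * inrHom K I J g) = .single i (τ g) := by
  induction g using AddMonoidAlgebra.induction_linear with
  | zero => simp
  | add f g hf hg => rw [map_add, mul_add, map_add, hf, hg, map_add, AddMonoidAlgebra.single_add]
  | single a c =>
    rw [AddMonoidAlgebra.mapDomainRingHom_apply, AddMonoidAlgebra.mapDomain_single,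
      AddMonoidAlgebra.single_mul_single, AddMonoidHom.inr_apply, Prod.mk_add_mk, add_zero,
      zero_add, one_mul, curryHom_single]

theorem curryHom_inrHom (τ : AddMonoidAlgebra K J →+* L) (g : AddMonoidAlgebra K J) :
    curryHom I τ (inrHom K I J g) = .single 0 (τ g) := by
  rw [← curryHom_single_mul_inrHom, ← Prod.zero_eq_mk, ← AddMonoidAlgebra.one_def, one_mul]

theorem gaussNorm_curryHom (w : Weight I) {w' : Weight J} {τ : AddMonoidAlgebra K J →+* L}
    (hτ : ∀ g, ‖τ g‖₊ = gaussNorm w' g) (f : AddMonoidAlgebra K (I × J)) :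
    gaussNorm w (curryHom I τ f) = gaussNorm (w.prod w') f := by
  have hcoeff (i : I) : ‖(curryHom I τ f).coeff i‖₊ =
      gaussNorm w' ((AddMonoidAlgebra.curryRingEquiv f).coeff i) := hτ _
  refine le_antisymm (gaussNorm_le fun i => ?_) (gaussNorm_le fun ⟨i, a⟩ => ?_)
  · rw [hcoeff, ← le_div_iff₀ (w.pos i)]
    refine gaussNorm_le fun a => ?_
    rw [le_div_iff₀ (w.pos i), coeff_coeff_curryRingEquiv, mul_right_comm, mul_assoc]
    exact le_gaussNorm (w.prod w') f (i, a)
  · calc ‖f.coeff (i, a)‖₊ * (w i * w' a)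
        = ‖((AddMonoidAlgebra.curryRingEquiv f).coeff i).coeff a‖₊ * w' a * w i := by
          rw [coeff_coeff_curryRingEquiv, mul_right_comm, mul_assoc]
      _ ≤ ‖(curryHom I τ f).coeff i‖₊ * w i := by
          rw [hcoeff]
          exact mul_le_mul_left (le_gaussNorm w' _ a) _
      _ ≤ gaussNorm w (curryHom I τ f) := le_gaussNorm w _ i

variable {A C : Type*} [NormedCommRing A] [NormedCommRing C] {w : Weight I}
  {j : AddMonoidAlgebra K (I × J) →+* A} {jC : AddMonoidAlgebra L I →+* C} {θ : A →+* C}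
  {τ : AddMonoidAlgebra K J →+* L}

theorem GaussModel.nnnorm_single_zero_mul (hj : GaussModel w jC) (c : L) (x : C) :
    ‖jC (.single 0 c) * x‖₊ = ‖c‖₊ * ‖x‖₊ := by
  have hnorm (c : L) : ‖jC (.single 0 c)‖₊ = ‖c‖₊ := by
    rw [hj.nnnorm_map, gaussNorm_single, w.map_zero, mul_one]
  have hle (c : L) (x : C) : ‖jC (.single 0 c) * x‖₊ ≤ ‖c‖₊ * ‖x‖₊ :=
    (nnnorm_mul_le _ _).trans_eq (by rw [hnorm])
  obtain rfl | hc := eq_or_ne c 0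
  · simp
  refine (hle c x).antisymm ?_
  have hinv : jC (.single 0 c⁻¹) * (jC (.single 0 c) * x) = x := by
    rw [← mul_assoc, ← map_mul, AddMonoidAlgebra.single_mul_single, inv_mul_cancel₀ hc, add_zero,
      ← AddMonoidAlgebra.one_def, map_one, one_mul]
  have hx := hle c⁻¹ (jC (.single 0 c) * x)
  rwa [hinv, nnnorm_inv, inv_mul_eq_div, le_div_iff₀ (nnnorm_pos.2 hc), mul_comm] at hx

theorem GaussModel.norm_single (hj : GaussModel w jC) (i : I) (c : L) :
    ‖jC (.single i c)‖ = ‖c‖ * w i := by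
  rw [← coe_nnnorm, hj.nnnorm_map, gaussNorm_single, NNReal.coe_mul, coe_nnnorm]

theorem GaussModel.continuous_single (hj : GaussModel w jC) (i : I) :
    Continuous fun c : L => jC (.single i c) := by
  let φ : L →+ C := (jC : _ →+ C).comp (AddMonoidAlgebra.singleAddHom i)
  refine AddMonoidHomClass.continuous_of_bound φ (w i) fun c => le_of_eq ?_
  rw [mul_comm]
  exact hj.norm_single i c

theorem GaussModel.dense_fractions (hjC : GaussModel w jC)
    (hθ : ∀ f, θ (j f) = jC (curryHom I τ f)) {S : Submonoid (AddMonoidAlgebra K J)}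
    (hτ : Dense (fractions τ S : Set L)) :
    Dense (fractions θ (S.map (j.comp (inrHom K I J))) : Set C) := by
  set F := fractions θ (S.map (j.comp (inrHom K I J)))
  have hsingle (i : I) (l : L) : jC (.single i l) ∈ F.topologicalClosure := by
    refine map_mem_closure (f := fun c => jC (.single i c)) (hjC.continuous_single i) (hτ l) ?_
    rintro c ⟨s, hs, x, hx⟩
    refine ⟨_, ⟨s, hs, rfl⟩, j (.single (i, 0) 1 * inrHom K I J x), ?_⟩
    rw [RingHom.comp_apply, hθ, hθ, curryHom_inrHom, curryHom_single_mul_inrHom, ← map_mul,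
      AddMonoidAlgebra.single_mul_single, zero_add, hx]
  have hmem (f : AddMonoidAlgebra L I) : jC f ∈ F.topologicalClosure := by
    induction f using AddMonoidAlgebra.induction_linear with
    | zero => rw [map_zero]; exact zero_mem _
    | add f g hf hg => rw [map_add]; exact add_mem hf hg
    | single i l => exact hsingle i l
  exact dense_closure.1 (hjC.denseRange.mono (Set.range_subset_iff.2 hmem))

end CurryHom

/-- Over every complete ultrametric field, the completed polynomial ring of weight `w` is a domain
over which finite projective modules are free. The induction on the number of variables needs all
fields at once, since adjoining a variable replaces `K` by the completion of `K(t)`. -/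
def Weight.ModelsFree {I : Type} [AddCommMonoid I] (w : Weight I) : Prop :=
  ∀ (K : Type u) [NormedField K] [CompleteSpace K] [IsUltrametricDist K] (A : Type u)
    [NormedCommRing A] [CompleteSpace A] [IsUltrametricDist A] (j : AddMonoidAlgebra K I →+* A),
    GaussModel w j → ProjectivesFree A ∧ IsDomain A

section ModelsFree

variable {I J : Type} [AddCommMonoid I] [AddCommMonoid J]

theorem GaussModel.exists_localization {K A : Type u} [NormedField K] [IsUltrametricDist K]
    [NormedCommRing A] [LinearOrder J] [IsOrderedCancelAddMonoid J] {w : Weight I} {w' : Weight J}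
    {j : AddMonoidAlgebra K (I × J) →+* A} (hj : GaussModel (w.prod w') j)
    (hw : Weight.ModelsFree.{u} w) :
    ∃ (C : Type u) (_ : NormedCommRing C) (θ : A →+* C), ProjectivesFree C ∧ IsDomain C ∧
      (∀ x, ‖θ x‖₊ = ‖x‖₊) ∧
      (∀ g c, ‖θ (j (inrHom K I J g)) * c‖₊ = ‖j (inrHom K I J g)‖₊ * ‖c‖₊) ∧
      Dense (fractions θ ((nonZeroDivisors _).map (j.comp (inrHom K I J))) : Set C) := by
  obtain ⟨L, _, _, _, τ, hτ, hτdense⟩ := exists_normedField_completion (gaussValuation (K := K) w')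
    fun g hg => by_contra fun hg0 => (gaussNorm_pos w' hg0).ne' hg
  obtain ⟨C, _, _, _, jC, hjC⟩ := exists_gaussModel L w
  obtain ⟨hfree, hdomain⟩ := hw L C jC hjC
  obtain ⟨θ, hθj, hθ⟩ := exists_isometric_extension hj.denseRange (f := jC.comp (curryHom I τ))
    fun f => by rw [RingHom.comp_apply, hjC.nnnorm_map, gaussNorm_curryHom w hτ, hj.nnnorm_map]
  refine ⟨C, _, θ, hfree, hdomain, hθ, fun g c => ?_, hjC.dense_fractions hθj hτdense⟩
  rw [hθj, RingHom.comp_apply, curryHom_inrHom, hjC.nnnorm_single_zero_mul, hj.nnnorm_map,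
    gaussNorm_inrHom]
  exact congr_arg (· * _) (hτ g)

theorem Weight.ModelsFree.prod [LinearOrder J] [IsOrderedCancelAddMonoid J] {w : Weight I}
    (hw : Weight.ModelsFree.{u} w) (w' : Weight J) {o : J} (ho : IsExponentLine o) :
    Weight.ModelsFree.{u} (w.prod w') := by
  intro K _ _ _ A _ _ _ j hj
  obtain ⟨C, _, θ, hCfree, hCdomain, hθ, hθmul, hdense⟩ := hj.exists_localization hw
  have hA : IsDomain A := Function.Injective.isDomain θ
    (AddMonoidHomClass.isometry_of_norm θ fun x => congr_arg NNReal.toReal (hθ x)).injective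
  refine ⟨fun N e he => ?_, hA⟩
  obtain ⟨R, _, _, _, jR, hjR⟩ := exists_gaussModel K w
  obtain ⟨hRfree, hRdomain⟩ := hw K R jR hjR
  obtain ⟨ι, hιj, hι⟩ := exists_isometric_extension hjR.denseRange (f := j.comp (inlHom K I J))
    fun f => by rw [RingHom.comp_apply, hj.nnnorm_map, gaussNorm_inlHom, hjR.nnnorm_map]
  have hne : ∀ s ∈ (nonZeroDivisors _).map (j.comp (inrHom K I J)), s ≠ 0 := by
    rintro _ ⟨g, hg, rfl⟩
    rw [← nnnorm_pos, RingHom.comp_apply, hj.nnnorm_map, gaussNorm_inrHom]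
    exact gaussNorm_pos w' (nonZeroDivisors.ne_zero hg)
  obtain ⟨h, _, ⟨g, -, rfl⟩, hh, hsplits⟩ := exists_splitsAway_of_isFreeIdem_map hθ hne
    (by rintro _ ⟨g, -, rfl⟩; exact hθmul g) hdense he (hCfree N _ (isIdempotentElem_map he θ))
  rw [RingHom.comp_apply, hj.nnnorm_map, gaussNorm_inrHom] at hh
  obtain ⟨ω, hω, hdivision, u, hu⟩ :=
    hj.exists_weierstrassDivision_of_nnnorm_sub_lt hjR hι hιj ho hh
  exact hdivision.isFreeIdem hRfree hω (hu ▸ hsplits.mul_left (u : A))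

end ModelsFree

/-! ### Polynomial and Laurent variables -/

section ModelsFree

variable {I I' : Type} [AddCommMonoid I] [AddCommMonoid I']

theorem Weight.ModelsFree.of_addEquiv {w : Weight I} (hw : Weight.ModelsFree.{u} w)
    {w' : Weight I'} (e : I ≃+ I') (h : ∀ i, w' (e i) = w i) : Weight.ModelsFree.{u} w' := by
  intro K _ _ _ A _ _ _ j hj
  refine hw K A (j.comp (AddMonoidAlgebra.mapDomainRingHom K (e : I →+ I'))) ⟨fun f => ?_, ?_⟩
  · rw [RingHom.comp_apply, hj.nnnorm_map]
    exact gaussNorm_mapDomain w (φ := (e : I →+ I')) e.injective h f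
  · have hsurj : Function.Surjective (AddMonoidAlgebra.mapDomainRingHom K (e : I →+ I')) :=
      (AddMonoidAlgebra.mapDomainRingEquiv K e).surjective
    exact hj.denseRange.mono (hsurj.range_comp j).ge

theorem Weight.modelsFree_of_subsingleton [Subsingleton I] (w : Weight I) :
    Weight.ModelsFree.{u} w := by
  intro K _ _ _ A _ _ _ j hj
  let κ : K →+* A := j.comp AddMonoidAlgebra.singleZeroRingHom
  have hiso : Isometry κ := AddMonoidHomClass.isometry_of_norm κ fun c =>
    (hj.norm_single 0 c).trans (by rw [w.map_zero, NNReal.coe_one, mul_one])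
  have hdense : DenseRange κ := by
    refine hj.denseRange.mono (Set.range_subset_iff.2 fun f => ⟨f.coeff 0, congr_arg j ?_⟩)
    ext i
    simp [Subsingleton.elim i 0]
  have hsurj : Function.Surjective κ :=
    Set.range_eq_univ.1 (hiso.isClosedEmbedding.isClosed_range.closure_eq ▸ hdense.closure_range)
  let φ : K ≃+* A := .ofBijective κ ⟨hiso.injective, hsurj⟩
  exact ⟨(projectivesFree_of_field K).of_ringEquiv φ, φ.symm.isDomain_iff.2 inferInstance⟩

end ModelsFree

theorem isExponentLine_nat_one : IsExponentLine (1 : ℕ) where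
  pos := one_pos
  exists_eq_add_nsmul a b hab := ⟨b - a, by simp [hab]⟩
  nonneg_or_exists_add_eq_zero := .inl Nat.zero_le

theorem isExponentLine_int_one : IsExponentLine (1 : ℤ) where
  pos := one_pos
  exists_eq_add_nsmul a b hab := ⟨(b - a).toNat, by simp [hab]⟩
  nonneg_or_exists_add_eq_zero := .inr fun a => ⟨-a, add_neg_cancel a⟩

/-- The weight `k ↦ c ^ k` of a polynomial variable. -/
def Weight.nat {c : ℝ≥0} (hc : c ≠ 0) : Weight ℕ where
  toFun k := c ^ k
  map_zero := pow_zero c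
  map_add := pow_add c
  ne_zero _ := pow_ne_zero _ hc

/-- The weight `k ↦ c ^ k` of a Laurent variable. -/
noncomputable def Weight.int {c : ℝ≥0} (hc : c ≠ 0) : Weight ℤ where
  toFun k := c ^ k
  map_zero := zpow_zero c
  map_add := zpow_add₀ hc
  ne_zero _ := zpow_ne_zero _ hc

/-- The weight `(i, j) ↦ γ ^ i * ρ ^ j` of monomials in polynomial and Laurent variables. -/
noncomputable def Weight.multi {m n : ℕ} {γ : Fin m → ℝ≥0} {ρ : Fin n → ℝ≥0} (hγ : ∀ k, γ k ≠ 0)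
    (hρ : ∀ k, ρ k ≠ 0) : Weight ((Fin m → ℕ) × (Fin n → ℤ)) where
  toFun x := (∏ k, γ k ^ x.1 k) * ∏ k, ρ k ^ x.2 k
  map_zero := by simp
  map_add a b := by
    simp only [Prod.fst_add, Prod.snd_add, Pi.add_apply, pow_add, zpow_add₀ (hρ _),
      Finset.prod_mul_distrib, mul_mul_mul_comm]
  ne_zero _ := mul_ne_zero (Finset.prod_ne_zero_iff.2 fun k _ => pow_ne_zero _ (hγ k))
    (Finset.prod_ne_zero_iff.2 fun k _ => zpow_ne_zero _ (hρ k))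

/-- The equivalence splitting off the first polynomial variable. -/
def consNatAddEquiv (m n : ℕ) :
    ((Fin m → ℕ) × (Fin n → ℤ)) × ℕ ≃+ (Fin (m + 1) → ℕ) × (Fin n → ℤ) where
  toFun x := (Fin.cons x.2 x.1.1, x.1.2)
  invFun y := ((Fin.tail y.1, y.2), y.1 0)
  left_inv x := by simp
  right_inv y := by simp
  map_add' x y := Prod.ext (funext fun k => by cases k using Fin.cases <;> simp) rfl

/-- The equivalence splitting off the first Laurent variable. -/
def consIntAddEquiv (m n : ℕ) :
    ((Fin m → ℕ) × (Fin n → ℤ)) × ℤ ≃+ (Fin m → ℕ) × (Fin (n + 1) → ℤ) where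
  toFun x := (x.1.1, Fin.cons x.2 x.1.2)
  invFun y := ((y.1, Fin.tail y.2), y.2 0)
  left_inv x := by simp
  right_inv y := by simp
  map_add' x y := Prod.ext rfl (funext fun k => by cases k using Fin.cases <;> simp)

theorem Weight.modelsFree_multi {m n : ℕ} {γ : Fin m → ℝ≥0} {ρ : Fin n → ℝ≥0}
    (hγ : ∀ k, γ k ≠ 0) (hρ : ∀ k, ρ k ≠ 0) : Weight.ModelsFree.{u} (Weight.multi hγ hρ) := by
  induction m with
  | zero =>
    induction n with
    | zero => exact modelsFree_of_subsingleton _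
    | succ n ih =>
      refine ((ih fun k => hρ k.succ).prod (.int (hρ 0)) isExponentLine_int_one).of_addEquiv
        (consIntAddEquiv 0 n) fun x => ?_
      simp [multi, int, prod, consIntAddEquiv, Fin.prod_univ_succ, mul_comm]
  | succ m ih =>
    refine ((ih fun k => hγ k.succ).prod (.nat (hγ 0)) isExponentLine_nat_one).of_addEquiv
      (consNatAddEquiv m n) fun x => ?_
    simp [multi, nat, prod, consNatAddEquiv, Fin.prod_univ_succ, mul_comm, mul_left_comm]

/-! ### Series expansions -/

/-- The coefficients `c` are those of a series converging in the completed polynomial ring of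
weight `w`. -/
def Weight.IsDecaying {K I : Type*} [NormedField K] [AddCommMonoid I] (w : Weight I) (c : I → K) :
    Prop :=
  Tendsto (fun i => ‖c i‖ * w i) cofinite (nhds 0)

/-- The sum in `B` of the series with coefficients `c`. -/
noncomputable def seriesSum {K I B : Type*} [NormedField K] [AddCommMonoid I] [NormedCommRing B]
    (j : AddMonoidAlgebra K I →+* B) (c : I → K) : B :=
  ∑' i, j (.single i (c i))

section Series

variable {K I B : Type*} [NormedField K] [AddCommMonoid I] [NormedCommRing B] {w : Weight I}
  {j : AddMonoidAlgebra K I →+* B}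

theorem GaussModel.norm_coeff_mul_le (hj : GaussModel w j) (f : AddMonoidAlgebra K I) (i : I) :
    ‖f.coeff i‖ * w i ≤ ‖j f‖ := by
  rw [← coe_nnnorm (j f), hj.nnnorm_map]
  exact le_gaussNorm w f i

theorem isDecaying_coeff (w : Weight I) (f : AddMonoidAlgebra K I) : w.IsDecaying f.coeff := by
  refine tendsto_nhds_of_eventually_eq ?_
  filter_upwards [f.coeff.support.finite_toSet.compl_mem_cofinite] with i hi
  rw [Finsupp.notMem_support_iff.1 hi, norm_zero, zero_mul]

theorem Weight.IsDecaying.sub {c d : I → K} (hc : w.IsDecaying c) (hd : w.IsDecaying d) :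
    w.IsDecaying (c - d) := by
  refine squeeze_zero (fun i => by positivity) (fun i => ?_) (add_zero (0 : ℝ) ▸ hc.add hd)
  rw [← add_mul]
  exact mul_le_mul_of_nonneg_right (norm_sub_le _ _) (w i).2

theorem seriesSum_coeff (j : AddMonoidAlgebra K I →+* B) (f : AddMonoidAlgebra K I) :
    seriesSum j f.coeff = j f := by
  rw [seriesSum, tsum_eq_sum (s := f.coeff.support), ← map_sum]
  · exact congr_arg j f.sum_coeff_single
  · intro i hi
    rw [Finsupp.notMem_support_iff.1 hi, AddMonoidAlgebra.single_zero, map_zero]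

theorem GaussModel.exists_norm_coeff_sub_mul_le [CompleteSpace K] (hj : GaussModel w j) (b : B)
    (i : I) : ∃ c : K, ∀ f, ‖f.coeff i - c‖ * w i ≤ ‖j f - b‖ := by
  let _ : PseudoMetricSpace (AddMonoidAlgebra K I) := .induced j inferInstance
  have hjI : IsUniformInducing j := ⟨rfl⟩
  have hdist (f g : AddMonoidAlgebra K I) : ‖f.coeff i - g.coeff i‖ * w i ≤ ‖j f - j g‖ := by
    rw [← map_sub]
    exact hj.norm_coeff_mul_le (f - g) i
  have hcoeff : UniformContinuous fun f : AddMonoidAlgebra K I => f.coeff i :=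
    (LipschitzWith.of_dist_le_mul (K := (w i)⁻¹) fun f g => by
      rw [NNReal.coe_inv, ← div_eq_inv_mul, le_div_iff₀ (mod_cast w.pos i), dist_eq_norm]
      exact (hdist f g).trans_eq (dist_eq_norm _ _).symm).uniformContinuous
  have hdense := hjI.isDenseInducing hj.denseRange
  have hcont : Continuous (hdense.extend fun f => f.coeff i) :=
    (uniformContinuous_uniformly_extend hjI hj.denseRange hcoeff).continuous
  refine ⟨hdense.extend (fun f => f.coeff i) b, fun f => ?_⟩
  refine hj.denseRange.induction_on b (isClosed_le (by fun_prop) (by fun_prop)) fun g => ?_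
  rw [hdense.extend_eq hcoeff.continuous]
  exact hdist f g

theorem GaussModel.summable_mul_of_add_eq [CompleteSpace K] [IsUltrametricDist K] [DecidableEq I]
    (hj : GaussModel w j) {a b : I → K} (x : I)
    (hab : Summable fun pq : I × I => j (.single (pq.1 + pq.2) (a pq.1 * b pq.2))) :
    Summable fun pq : I × I => if pq.1 + pq.2 = x then a pq.1 * b pq.2 else 0 := by
  have : NonarchimedeanAddGroup K := IsUltrametricDist.nonarchimedeanAddGroup
  refine NonarchimedeanAddGroup.summable_of_tendsto_cofinite_zero ?_
  rw [tendsto_zero_iff_norm_tendsto_zero]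
  have hlim := hab.tendsto_cofinite_zero.norm.div_const (w x : ℝ)
  rw [norm_zero, zero_div] at hlim
  refine squeeze_zero (fun _ => norm_nonneg _) (fun pq => ?_) hlim
  split_ifs with h
  · rw [hj.norm_single, h, mul_div_cancel_right₀ _ (mod_cast w.ne_zero x)]
  · rw [norm_zero]
    positivity

variable [CompleteSpace B] [IsUltrametricDist B]

theorem GaussModel.hasSum_seriesSum (hj : GaussModel w j) {c : I → K} (hc : w.IsDecaying c) :
    HasSum (fun i => j (.single i (c i))) (seriesSum j c) := by
  have : NonarchimedeanAddGroup B := IsUltrametricDist.nonarchimedeanAddGroup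
  refine (NonarchimedeanAddGroup.summable_of_tendsto_cofinite_zero ?_).hasSum
  rw [tendsto_zero_iff_norm_tendsto_zero]
  simp only [hj.norm_single]
  exact hc

theorem GaussModel.norm_mul_le_norm_seriesSum (hj : GaussModel w j) {c : I → K}
    (hc : w.IsDecaying c) (i : I) : ‖c i‖ * w i ≤ ‖seriesSum j c‖ := by
  classical
  refine ge_of_tendsto (hj.hasSum_seriesSum hc).norm ?_
  filter_upwards [eventually_ge_atTop {i}] with s hs
  have hi : i ∈ s := Finset.singleton_subset_iff.1 hs
  have hcoeff : (∑ i ∈ s, AddMonoidAlgebra.single i (c i)).coeff i = c i := by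
    simp [AddMonoidAlgebra.coeff_sum, Finsupp.finsetSum_apply, Finsupp.single_apply, hi]
  rw [← map_sum, ← hcoeff]
  exact hj.norm_coeff_mul_le _ i

theorem GaussModel.norm_seriesSum_le (hj : GaussModel w j) {c : I → K} (hc : w.IsDecaying c)
    {D : ℝ} (hD : 0 ≤ D) (h : ∀ i, ‖c i‖ * w i ≤ D) : ‖seriesSum j c‖ ≤ D :=
  le_of_tendsto (hj.hasSum_seriesSum hc).norm <| .of_forall fun _ =>
    IsUltrametricDist.norm_sum_le_of_forall_le_of_nonneg hD fun i _ =>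
      (hj.norm_single i (c i)).trans_le (h i)

theorem GaussModel.seriesSum_add (hj : GaussModel w j) {c d : I → K} (hc : w.IsDecaying c)
    (hd : w.IsDecaying d) : seriesSum j (c + d) = seriesSum j c + seriesSum j d := by
  rw [← ((hj.hasSum_seriesSum hc).add (hj.hasSum_seriesSum hd)).tsum_eq]
  simp only [seriesSum, Pi.add_apply, AddMonoidAlgebra.single_add, map_add]

theorem GaussModel.exists_seriesSum_eq [CompleteSpace K] (hj : GaussModel w j) (b : B) :
    ∃ c : I → K, w.IsDecaying c ∧ seriesSum j c = b := by
  choose c hc using hj.exists_norm_coeff_sub_mul_le b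
  have happrox {ε : ℝ} (hε : 0 < ε) : ∃ f, ‖j f - b‖ < ε :=
    (hj.denseRange.exists_dist_lt b hε).imp fun f hf => by rwa [← dist_eq_norm, dist_comm]
  have hdecay : w.IsDecaying c := by
    refine Metric.tendsto_nhds.2 fun ε hε => ?_
    obtain ⟨f, hf⟩ := happrox hε
    filter_upwards [f.coeff.support.finite_toSet.compl_mem_cofinite] with i hi
    rw [Real.dist_0_eq_abs, abs_of_nonneg (by positivity)]
    simpa only [Finsupp.notMem_support_iff.1 hi, zero_sub, norm_neg] using (hc i f).trans_lt hf
  refine ⟨c, hdecay, eq_of_forall_dist_le fun ε hε => ?_⟩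
  obtain ⟨f, hf⟩ := happrox hε
  have hdiff := (isDecaying_coeff w f).sub hdecay
  have hsum : j f = seriesSum j (⇑f.coeff - c) + seriesSum j c := by
    rw [← hj.seriesSum_add hdiff hdecay, sub_add_cancel, seriesSum_coeff]
  have hle : dist (seriesSum j c) (j f) ≤ ‖j f - b‖ := by
    rw [dist_comm, dist_eq_norm, hsum, add_sub_cancel_right, ← hsum]
    exact hj.norm_seriesSum_le hdiff (norm_nonneg _) fun i => hc i f
  exact (dist_triangle_max _ (j f) _).trans
    (max_le (hle.trans hf.le) ((dist_eq_norm _ _).trans_le hf.le))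

theorem GaussModel.seriesSum_convolution [CompleteSpace K] [IsUltrametricDist K] [DecidableEq I]
    (hj : GaussModel w j) {a b : I → K} (ha : w.IsDecaying a) (hb : w.IsDecaying b) :
    seriesSum j (fun x => ∑' pq : I × I, if pq.1 + pq.2 = x then a pq.1 * b pq.2 else 0) =
      seriesSum j a * seriesSum j b := by
  have : NonarchimedeanRing B :=
    { is_nonarchimedean := IsUltrametricDist.nonarchimedeanAddGroup.is_nonarchimedean }
  have hprod := (hj.hasSum_seriesSum ha).mul_of_nonarchimedean (hj.hasSum_seriesSum hb)
  simp only [← map_mul, AddMonoidAlgebra.single_mul_single] at hprod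
  rw [← (hprod.tsum_fiberwise fun pq => pq.1 + pq.2).tsum_eq]
  refine tsum_congr fun x => ?_
  have hmap := (hj.summable_mul_of_add_eq x hprod.summable).hasSum.map
    (j.toAddMonoidHom.comp (AddMonoidAlgebra.singleAddHom x)) (hj.continuous_single x)
  refine hmap.tsum_eq.symm.trans (.trans (tsum_congr fun pq => ?_)
    (tsum_subtype {pq : I × I | pq.1 + pq.2 = x} fun pq =>
      j (.single (pq.1 + pq.2) (a pq.1 * b pq.2))).symm)
  by_cases h : pq.1 + pq.2 = x
  · simp [h]
  · simp [h]

theorem GaussModel.nonempty_ringEquiv [CompleteSpace K] [IsUltrametricDist K] [DecidableEq I]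
    (hj : GaussModel w j) {A : Type*} [CommRing A] (coeffs : A →+ (I → K))
    (hinjective : Function.Injective coeffs) (hone : coeffs 1 = fun x => if x = 0 then 1 else 0)
    (hmul : ∀ a b x, coeffs (a * b) x =
      ∑' pq : I × I, if pq.1 + pq.2 = x then coeffs a pq.1 * coeffs b pq.2 else 0)
    (hrange : ∀ c, w.IsDecaying c ↔ c ∈ Set.range coeffs) : Nonempty (A ≃+* B) := by
  have hdecay (a : A) : w.IsDecaying (coeffs a) := (hrange _).2 ⟨a, rfl⟩
  let φ : A →+* B :=
    { toFun a := seriesSum j (coeffs a)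
      map_zero' := by simp [seriesSum]
      map_one' := by
        rw [hone, ← map_one j, ← seriesSum_coeff]
        congr 1 with x
        simp [AddMonoidAlgebra.one_def, Finsupp.single_apply, eq_comm]
      map_add' a b := by rw [map_add, hj.seriesSum_add (hdecay a) (hdecay b)]
      map_mul' a b := by
        rw [← hj.seriesSum_convolution (hdecay a) (hdecay b), ← funext (hmul a b)] }
  refine ⟨.ofBijective φ ⟨(injective_iff_map_eq_zero φ).2 fun a ha => hinjective ?_, fun b => ?_⟩⟩
  · rw [map_zero]
    ext i
    have hle := hj.norm_mul_le_norm_seriesSum (hdecay a) i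
    rw [show seriesSum j (coeffs a) = 0 from ha, norm_zero] at hle
    exact norm_le_zero_iff.1 (nonpos_of_mul_nonpos_left hle (mod_cast w.pos i))
  · obtain ⟨c, hc, rfl⟩ := hj.exists_seriesSum_eq b
    obtain ⟨a, rfl⟩ := (hrange c).1 hc
    exact ⟨a, rfl⟩

end Series

theorem projectivesFree_of_isGaussCompletion {K : Type*} [NontriviallyNormedField K]
    [CompleteSpace K] [IsUltrametricDist K] {m n : ℕ} {γ : Fin m → ℝ} {ρ : Fin n → ℝ}
    (hγ : ∀ k, 0 < γ k) (hρ : ∀ k, 0 < ρ k) {A : Type*} [CommRing A] {coeffs : A → Idx m n → K}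
    (hA : IsGaussCompletion γ ρ A coeffs) : ProjectivesFree A := by
  lift γ to Fin m → ℝ≥0 using fun k => (hγ k).le
  lift ρ to Fin n → ℝ≥0 using fun k => (hρ k).le
  let w := Weight.multi (fun k => (NNReal.coe_pos.1 (hγ k)).ne')
    (fun k => (NNReal.coe_pos.1 (hρ k)).ne')
  have hw (c : Idx m n → K) : w.IsDecaying c ↔
      Tendsto (fun x => ‖c x‖ * wt (fun k => γ k) (fun k => ρ k) x) cofinite (nhds 0) := by
    simp [Weight.IsDecaying, w, Weight.multi, wt]
  obtain ⟨B, _, _, _, j, hj⟩ := exists_gaussModel K w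
  obtain ⟨φ⟩ := hj.nonempty_ringEquiv (.mk' coeffs hA.map_add) hA.injective
    hA.map_one hA.map_mul
    fun c => (hw c).trans ⟨hA.surj c, by rintro ⟨a, rfl⟩; exact hA.decay a⟩
  exact (Weight.modelsFree_multi _ _ K B j hj).1.of_ringEquiv φ.symm

end QuillenSuslin

theorem stmt5_general {K : Type*} [NontriviallyNormedField K] [CompleteSpace K]
    [IsUltrametricDist K] {m n : ℕ} (γ : Fin m → ℝ) (ρ : Fin n → ℝ)
    (hγ : ∀ k, 0 < γ k) (hρ : ∀ k, 0 < ρ k)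
    (A : Type*) [CommRing A] (coeffs : A → Idx m n → K)
    (hA : IsGaussCompletion γ ρ A coeffs)
    (P : Type*) [AddCommGroup P] [Module A P]
    [Module.Finite A P] [Module.Projective A P] :
    Module.Free A P :=
  (QuillenSuslin.projectivesFree_of_isGaussCompletion hγ hρ hA).free P

/-- every coherent locally free module (finite projective module) over
the ring `K⟨γ⁻¹s⟩⟨ρ/t, t/ρ⟩` of functions on `𝔹^m_γ × A^n_K([ρ,ρ])` is free, for any
`γ ∈ ℝ^m_{>0}`, `ρ ∈ ℝ^n_{>0}` and any complete nonarchimedean field `K` of mixed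
characteristic `(0, p)`. -/
theorem stmt5 {K : Type*} [NontriviallyNormedField K] [CompleteSpace K]
    [IsUltrametricDist K] [CharZero K]
    (p : ℕ) (hp : p.Prime) (hpK : ‖(p : K)‖ < 1)
    {m n : ℕ} (γ : Fin m → ℝ) (ρ : Fin n → ℝ)
    (hγ : ∀ k, 0 < γ k) (hρ : ∀ k, 0 < ρ k)
    (A : Type*) [CommRing A] (coeffs : A → Idx m n → K)
    (hA : IsGaussCompletion γ ρ A coeffs)
    (P : Type*) [AddCommGroup P] [Module A P]
    [Module.Finite A P] (hproj : Module.Projective A P) :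
    Module.Free A P :=
  stmt5_general γ ρ hγ hρ A coeffs hA P
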